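/- arXiv:1511.05934 — 2 statements merged into one kernel-verified Lean document; each statement's English description precedes it below -/
import Mathlib

section
/- Let u ∈ SBV(R^n), 0 ≤ u ≤ 1, be an inward minimizer of the functional F(v) = ∫|∇v|² dL^n + ∫_{J_v}((v^+)² + (v^-)²) dH^{n-1} + L^n({v>0} \ Ω), where u takes values in {0} ∪ [δ, 1] a.e. for some δ > 0. Then for every ball B_r(x) ⊂ R^n \ Ω, one has H^{n-1}(J_u ∩ B_r(x)) ≤ C(n) δ^{-2} r^{n-1}. -/
open MeasureTheory Metric Set Filter ENNReal
open scoped Topology NNReal ENNReal RealInnerProductSpace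

noncomputable section

abbrev En (n : ℕ) := EuclideanSpace ℝ (Fin n)

variable {n : ℕ}

/-- Divergence of a vector field. -/
def divg (φ : En n → En n) (x : En n) : ℝ :=
  ∑ i, fderiv ℝ φ x (EuclideanSpace.single i 1) i

/-- Total variation of a locally integrable function on a set, defined by duality with
smooth compactly supported vector fields. -/
def varMeas (u : En n → ℝ) (A : Set (En n)) : ℝ≥0∞ :=
  ⨆ φ : {φ : En n → En n // ContDiff ℝ (⊤ : ℕ∞) φ ∧ HasCompactSupport φ ∧ tsupport φ ⊆ A ∧
      ∀ x, ‖φ x‖ ≤ 1},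
    ENNReal.ofReal (∫ x, u x * divg φ.1 x)

/-- Approximate (measure-theoretic) upper limit. -/
def upperLim (u : En n → ℝ) (x : En n) : ℝ :=
  sInf {t : ℝ | Tendsto (fun r : ℝ =>
      (∫ y in ball x r, max (u y - t) 0) / (volume (ball x r)).toReal)
    (𝓝[>] 0) (𝓝 0)}

/-- Approximate (measure-theoretic) lower limit. -/
def lowerLim (u : En n → ℝ) (x : En n) : ℝ :=
  sSup {t : ℝ | Tendsto (fun r : ℝ =>
      (∫ y in ball x r, max (t - u y) 0) / (volume (ball x r)).toReal)
    (𝓝[>] 0) (𝓝 0)}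

/-- The singular (approximate discontinuity) set `S_u`. -/
def singSet (u : En n → ℝ) : Set (En n) := {x | lowerLim u x < upperLim u x}

-- The approximate jump set `J_u`: blow-ups converge in `L¹_loc` to a two-valued
-- function jumping across a hyperplane with normal `ν`.
open Classical in
def jumpSet (u : En n → ℝ) : Set (En n) :=
  {x | ∃ ν : En n, ‖ν‖ = 1 ∧ lowerLim u x < upperLim u x ∧
    ∀ R > (0:ℝ), Tendsto (fun r : ℝ =>
      ∫ y in ball (0 : En n) R,
        |u (x + r • y) - (if 0 < ⟪ν, y⟫ then upperLim u x else lowerLim u x)|)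
      (𝓝[>] 0) (𝓝 0)}

/-- The reduced boundary `∂*E`, i.e. the jump set of the indicator function. -/
def redBdry (A : Set (En n)) : Set (En n) := jumpSet (A.indicator fun _ => (1:ℝ))

/-- The essential boundary `∂ᵉE`: points of Lebesgue density neither `0` nor `1`. -/
def essBdry (A : Set (En n)) : Set (En n) :=
  {x | ¬ Tendsto (fun r : ℝ => volume (A ∩ ball x r) / volume (ball x r)) (𝓝[>] 0) (𝓝 0) ∧
       ¬ Tendsto (fun r : ℝ => volume (A ∩ ball x r) / volume (ball x r)) (𝓝[>] 0) (𝓝 1)}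

/-- `g` is the approximate gradient of `u` (a.e. approximate differentiability). -/
def IsApproxGradient {n : ℕ} (u : En n → ℝ) (g : En n → En n) : Prop :=
  ∀ᵐ x, Tendsto (fun r : ℝ =>
      (∫ y in ball x r, |u y - u x - ⟪g x, y - x⟫|) / ((volume (ball x r)).toReal * r))
    (𝓝[>] 0) (𝓝 0)

/-- The thermal insulation functional
`F(u) = ∫ |∇u|² + ∫_{J_u} ((u⁺)² + (u⁻)²) dH^{n-1} + Lⁿ({u > 0} \ Ω)`,
with `g` the approximate gradient of `u`. -/
def EnergyF {n : ℕ} (u : En n → ℝ) (g : En n → En n) (Ω : Set (En n)) : ℝ≥0∞ :=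
  (∫⁻ x, ENNReal.ofReal (‖g x‖^2)) +
  (∫⁻ x in jumpSet u, ENNReal.ofReal ((upperLim u x)^2 + (lowerLim u x)^2) ∂μH[(n:ℝ)-1]) +
  volume ({x | 0 < u x} \ Ω)

/-!
Compare `u` with `u · 1_{ℝⁿ ∖ B_r(x)}`. The competitor has no larger gradient and volume terms, and
off the closed ball both functions have the same jumps. Its only other jumps lie on the sphere
`∂B_r(x)`, where the density `(v⁺)² + (v⁻)²` is at most `2`. Cancelling the common finite jump
energy bounds the jump energy of `u` in the ball by `2 H^{n-1}(∂B_r(x))`. Conversely, since `u`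
takes no values in `(0, δ)`, every jump point has `u⁺ ≥ δ`, so this energy is at least
`δ² H^{n-1}(J_u ∩ B_r(x))`.

The complement of a ball has finite perimeter because its indicator is an `L¹` limit of
`1/ε`-Lipschitz functions whose transition layers have volume `O(ε)`. The unit sphere has finite
`H^{n-1}` measure because it is covered by the radial projections of the faces of a cube.
-/

/-- The mean of `w` over `ball x r` tends to `0` as `r → 0⁺`. The sets of levels defining
`upperLim u x` and `lowerLim u x` consist of the `t` for which the positive part of `u - t`,
respectively of `t - u`, has this property. -/
def MeanTendstoZero (w : En n → ℝ) (x : En n) : Prop :=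
  Tendsto (fun r : ℝ => (∫ y in ball x r, w y) / (volume (ball x r)).toReal) (𝓝[>] 0) (𝓝 0)

lemma setIntegral_ball_eventuallyEq {X E : Type*} [PseudoMetricSpace X] [MeasurableSpace X]
    [OpensMeasurableSpace X] [NormedAddCommGroup E] [NormedSpace ℝ E] {μ : Measure X}
    {w w' : X → E} {x : X} (h : w =ᶠ[𝓝 x] w') :
    (fun r => ∫ y in ball x r, w y ∂μ) =ᶠ[𝓝[>] 0] fun r => ∫ y in ball x r, w' y ∂μ := by
  obtain ⟨ε, hε, hball⟩ := Metric.eventually_nhds_iff_ball.1 h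
  filter_upwards [Ioo_mem_nhdsGT hε] with r hr
  exact setIntegral_congr_fun measurableSet_ball fun y hy => hball y (ball_subset_ball hr.2.le hy)

lemma integrableOn_ball_of_locallyIntegrable {X E : Type*} [PseudoMetricSpace X] [ProperSpace X]
    [MeasurableSpace X] [NormedAddCommGroup E] {μ : Measure X} {w : X → E}
    (hw : LocallyIntegrable w μ) (x : X) (r : ℝ) : IntegrableOn w (ball x r) μ :=
  (hw.integrableOn_isCompact (isCompact_closedBall x r)).mono_set ball_subset_closedBall

lemma locallyIntegrable_of_mem_Icc {X : Type*} [TopologicalSpace X] [MeasurableSpace X]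
    {μ : Measure X} [IsLocallyFiniteMeasure μ] {u : X → ℝ} {a b : ℝ}
    (hu : AEStronglyMeasurable u μ) (hab : ∀ x, u x ∈ Icc a b) : LocallyIntegrable u μ :=
  (memLp_top_of_bound hu (max |a| |b|) (ae_of_all _ fun x =>
    abs_le_max_abs_abs (hab x).1 (hab x).2)).locallyIntegrable le_top

lemma continuous_setIntegral_ball {V E : Type*} [NormedAddCommGroup V] [NormedSpace ℝ V]
    [FiniteDimensional ℝ V] [MeasurableSpace V] [BorelSpace V] [NormedAddCommGroup E]
    [NormedSpace ℝ E] {μ : Measure V} [μ.IsAddHaarMeasure] {w : V → E}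
    (hw : LocallyIntegrable w μ) {r : ℝ} (hr : r ≠ 0) :
    Continuous fun x => ∫ y in ball x r, w y ∂μ := by
  simp_rw [← integral_indicator measurableSet_ball]
  refine continuous_iff_continuousAt.2 fun x => ?_
  refine continuousAt_of_dominated (bound := (ball x (r + 1)).indicator fun y => ‖w y‖)
    (Eventually.of_forall fun z => hw.aestronglyMeasurable.indicator measurableSet_ball) ?_
    ((integrable_indicator_iff measurableSet_ball).2
      (integrableOn_ball_of_locallyIntegrable hw x (r + 1)).norm) ?_
  · filter_upwards [ball_mem_nhds x one_pos] with z hz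
    refine ae_of_all _ fun y => ?_
    rw [norm_indicator_eq_indicator_norm]
    refine indicator_le_indicator_of_subset (ball_subset_ball' ?_) (fun y => norm_nonneg _) y
    linarith [mem_ball.1 hz]
  · have hsphere : ∀ᵐ y ∂μ, y ∉ sphere x r :=
      measure_eq_zero_iff_ae_notMem.1 (Measure.addHaar_sphere_of_ne_zero μ x hr)
    filter_upwards [hsphere] with y hy
    rcases lt_or_gt_of_ne (mem_sphere.not.1 hy) with hlt | hgt
    · refine continuousAt_const.congr (f := fun _ => w y) ?_
      filter_upwards [(continuous_const.dist continuous_id).continuousAt.eventually_lt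
        continuousAt_const hlt] with z hz
      exact (indicator_of_mem (mem_ball.2 hz) w).symm
    · refine continuousAt_const.congr (f := fun _ => (0 : E)) ?_
      filter_upwards [continuousAt_const.eventually_lt
        (continuous_const.dist continuous_id).continuousAt hgt] with z hz
      exact (indicator_of_notMem (fun h => (mem_ball.1 h).not_gt hz) w).symm

lemma measurableSet_meanTendstoZero {w : En n → ℝ} (hw : LocallyIntegrable w) :
    MeasurableSet {x | MeanTendstoZero w x} := by
  have hbasis := nhdsWithin_hasBasis (nhds_basis_ball_inv_nat_succ (x := (0 : ℝ))) (Ioi 0)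
  simp only [MeanTendstoZero, hbasis.tendsto_iff nhds_basis_closedBall_inv_nat_succ, true_and,
    true_imp_iff, ofPred_forall, ofPred_exists]
  refine MeasurableSet.iInter fun k => MeasurableSet.iUnion fun j => IsClosed.measurableSet ?_
  refine isClosed_iInter fun r => isClosed_iInter fun hr => isClosed_closedBall.preimage ?_
  simp only [Measure.addHaar_ball_center]
  exact (continuous_setIntegral_ball hw (ne_of_gt hr.2)).div_const _

namespace MeanTendstoZero

variable {w w' : En n → ℝ} {x : En n}

lemma congr (h : w =ᶠ[𝓝 x] w') : MeanTendstoZero w x ↔ MeanTendstoZero w' x :=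
  tendsto_congr' ((setIntegral_ball_eventuallyEq h).div EventuallyEq.rfl)

lemma zero : MeanTendstoZero (fun _ => 0) x := by
  simp [MeanTendstoZero]

lemma const_mul (h : MeanTendstoZero w x) (c : ℝ) : MeanTendstoZero (fun y => c * w y) x := by
  simpa only [MeanTendstoZero, integral_const_mul, mul_div_assoc, mul_zero] using
    Tendsto.const_mul c h

lemma mono (h : MeanTendstoZero w' x) (hw' : LocallyIntegrable w') (hw : 0 ≤ᵐ[volume] w)
    (hle : w ≤ᵐ[volume] w') : MeanTendstoZero w x := by
  refine squeeze_zero (fun r => ?_) (fun r => ?_) h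
  · exact div_nonneg (integral_nonneg_of_ae (ae_restrict_of_ae hw)) ENNReal.toReal_nonneg
  · exact div_le_div_of_nonneg_right (integral_mono_of_nonneg (ae_restrict_of_ae hw)
      (integrableOn_ball_of_locallyIntegrable hw' x r) (ae_restrict_of_ae hle))
      ENNReal.toReal_nonneg

lemma eq_zero_of_const {c : ℝ} (h : MeanTendstoZero (fun _ => c) x) : c = 0 := by
  refine tendsto_nhds_unique (Tendsto.congr' ?_ tendsto_const_nhds) h
  filter_upwards [self_mem_nhdsWithin] with r hr
  have hvol : (volume (ball x r)).toReal ≠ 0 :=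
    (ENNReal.toReal_pos (measure_ball_pos volume x hr).ne' measure_ball_lt_top.ne).ne'
  simp [measureReal_def, hvol]

end MeanTendstoZero

lemma locallyIntegrable_posPart_sub {X : Type*} [TopologicalSpace X]
    [SecondCountableTopology X] [MeasurableSpace X] {μ : Measure X} [IsLocallyFiniteMeasure μ]
    {u : X → ℝ}
    (hu : LocallyIntegrable u μ) (t : ℝ) : LocallyIntegrable (fun y => max (u y - t) 0) μ := by
  refine (hu.sub (locallyIntegrable_const t)).mono ?_ (ae_of_all _ fun y => ?_)
  · exact (hu.aestronglyMeasurable.sub aestronglyMeasurable_const).sup aestronglyMeasurable_const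
  · rw [Real.norm_eq_abs, abs_of_nonneg (le_max_right (u y - t) 0)]
    exact max_le (le_abs_self _) (abs_nonneg _)

section ApproximateLimits

variable {u v : En n → ℝ} {a b : ℝ} {x : En n}

lemma upperLim_congr (h : u =ᶠ[𝓝 x] v) : upperLim u x = upperLim v x :=
  congrArg sInf <| Set.ext fun t =>
    MeanTendstoZero.congr (h.mono fun y hy => by simp only [hy])

lemma lowerLim_eq_neg_upperLim_neg (u : En n → ℝ) (x : En n) :
    lowerLim u x = -upperLim (fun y => -u y) x := by
  rw [lowerLim, upperLim, ← Real.sSup_neg]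
  congr 1
  ext t
  simp only [Set.mem_neg, mem_ofPred_eq, neg_sub_neg]

lemma lowerLim_congr (h : u =ᶠ[𝓝 x] v) : lowerLim u x = lowerLim v x := by
  simp only [lowerLim_eq_neg_upperLim_neg]
  rw [upperLim_congr (h.mono fun y hy => congrArg Neg.neg hy)]

lemma meanTendstoZero_posPart_sub_of_le (hb : ∀ y, u y ≤ b) :
    MeanTendstoZero (fun y => max (u y - b) 0) x := by
  simpa only [max_eq_right (sub_nonpos.2 (hb _))] using MeanTendstoZero.zero

lemma le_of_meanTendstoZero_posPart_sub (hu : LocallyIntegrable u) (ha : ∀ y, a ≤ u y) {t : ℝ}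
    (ht : MeanTendstoZero (fun y => max (u y - t) 0) x) : a ≤ t := by
  by_contra! hta
  have hconst : MeanTendstoZero (fun _ => a - t) x :=
    ht.mono (locallyIntegrable_posPart_sub hu t) (ae_of_all _ fun _ => (sub_pos.2 hta).le)
      (ae_of_all _ fun y => le_max_of_le_left (sub_le_sub_right (ha y) t))
  exact (sub_pos.2 hta).ne' hconst.eq_zero_of_const

lemma upperLim_le_of_meanTendstoZero (hu : LocallyIntegrable u) (ha : ∀ y, a ≤ u y) {t : ℝ}
    (ht : MeanTendstoZero (fun y => max (u y - t) 0) x) : upperLim u x ≤ t :=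
  csInf_le ⟨a, fun _ => le_of_meanTendstoZero_posPart_sub hu ha⟩ ht

lemma upperLim_mem_Icc (hu : LocallyIntegrable u) (hab : ∀ y, u y ∈ Icc a b) :
    upperLim u x ∈ Icc a b :=
  ⟨le_csInf ⟨b, meanTendstoZero_posPart_sub_of_le fun y => (hab y).2⟩
      fun _ => le_of_meanTendstoZero_posPart_sub hu fun y => (hab y).1,
    upperLim_le_of_meanTendstoZero hu (fun y => (hab y).1)
      (meanTendstoZero_posPart_sub_of_le fun y => (hab y).2)⟩

lemma lowerLim_mem_Icc (hu : LocallyIntegrable u) (hab : ∀ y, u y ∈ Icc a b) :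
    lowerLim u x ∈ Icc a b := by
  have hneg : upperLim (fun y => -u y) x ∈ Icc (-b) (-a) :=
    upperLim_mem_Icc hu.neg fun y => ⟨neg_le_neg (hab y).2, neg_le_neg (hab y).1⟩
  rw [lowerLim_eq_neg_upperLim_neg]
  exact ⟨le_neg_of_le_neg hneg.2, neg_le_of_neg_le hneg.1⟩

lemma le_upperLim_of_not_meanTendstoZero {δ : ℝ} (hu : LocallyIntegrable u)
    (hb : ∀ y, u y ∈ Icc 0 b) (hδ : ∀ᵐ y, u y = 0 ∨ δ ≤ u y) (hx : ¬ MeanTendstoZero u x) :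
    δ ≤ upperLim u x := by
  contrapose! hx
  obtain ⟨t, ht, htδ⟩ := exists_lt_of_csInf_lt
    ⟨b, meanTendstoZero_posPart_sub_of_le fun y => (hb y).2⟩ hx
  have ht0 : 0 ≤ t := le_of_meanTendstoZero_posPart_sub hu (fun y => (hb y).1) ht
  have hδ0 : 0 ≤ δ := ht0.trans htδ.le
  have hδt : 0 < δ - t := sub_pos.2 htδ
  have hint : LocallyIntegrable fun y => δ / (δ - t) * max (u y - t) 0 :=
    (locallyIntegrable_posPart_sub hu t).smul (δ / (δ - t))
  refine (MeanTendstoZero.const_mul ht (δ / (δ - t))).mono hint (ae_of_all _ fun y => (hb y).1) ?_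
  filter_upwards [hδ] with y hy
  rcases hy with h0 | hle
  · rw [h0]
    positivity
  · calc u y ≤ δ / (δ - t) * (u y - t) := by
          rw [div_mul_eq_mul_div, le_div_iff₀ hδt]
          nlinarith
      _ ≤ δ / (δ - t) * max (u y - t) 0 := by
          gcongr
          exact le_max_left _ _

lemma not_meanTendstoZero_of_mem_jumpSet (hu : LocallyIntegrable u)
    (hb : ∀ y, u y ∈ Icc 0 b) (hx : x ∈ jumpSet u) : ¬ MeanTendstoZero u x := by
  intro h
  obtain ⟨-, -, hlt, -⟩ := hx
  have hupper : upperLim u x ≤ 0 := upperLim_le_of_meanTendstoZero hu (fun y => (hb y).1) <| by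
    simpa only [sub_zero, max_eq_left (hb _).1] using h
  exact hlt.not_ge (hupper.trans (lowerLim_mem_Icc hu hb).1)

end ApproximateLimits

lemma mem_jumpSet_of_eventuallyEq {u v : En n → ℝ} {x : En n} (h : u =ᶠ[𝓝 x] v)
    (hx : x ∈ jumpSet u) : x ∈ jumpSet v := by
  obtain ⟨ν, hν, hlt, hblow⟩ := hx
  rw [upperLim_congr h, lowerLim_congr h] at hlt
  refine ⟨ν, hν, hlt, fun R hR => (hblow R hR).congr' ?_⟩
  obtain ⟨ε, hε, hball⟩ := Metric.eventually_nhds_iff_ball.1 h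
  filter_upwards [Ioo_mem_nhdsGT (div_pos hε hR)] with r hr
  refine setIntegral_congr_fun measurableSet_ball fun y hy => ?_
  have hmem : x + r • y ∈ ball x ε := by
    rw [mem_ball_iff_norm, add_sub_cancel_left, norm_smul, Real.norm_of_nonneg hr.1.le]
    calc r * ‖y‖ ≤ r * R := mul_le_mul_of_nonneg_left (mem_ball_zero_iff.1 hy).le hr.1.le
      _ < ε := (lt_div_iff₀ hR).1 hr.2
  simp only [hball _ hmem, upperLim_congr h, lowerLim_congr h]

lemma mem_jumpSet_congr {u v : En n → ℝ} {x : En n} (h : u =ᶠ[𝓝 x] v) :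
    x ∈ jumpSet u ↔ x ∈ jumpSet v :=
  ⟨mem_jumpSet_of_eventuallyEq h, mem_jumpSet_of_eventuallyEq h.symm⟩

lemma notMem_jumpSet_of_eventuallyEq_const {u : En n → ℝ} {x : En n} {c : ℝ}
    (h : u =ᶠ[𝓝 x] fun _ => c) : x ∉ jumpSet u := by
  rw [mem_jumpSet_congr h]
  rintro ⟨-, -, hlt, -⟩
  have hmem : ∀ y : En n, (fun _ : En n => c) y ∈ Icc c c := fun _ => ⟨le_rfl, le_rfl⟩
  have hupper := upperLim_mem_Icc (x := x) (locallyIntegrable_const c) hmem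
  have hlower := lowerLim_mem_Icc (x := x) (locallyIntegrable_const c) hmem
  exact hlt.not_ge (hupper.2.trans hlower.1)

/-- The density `(u⁺)² + (u⁻)²` of the jump part of the energy `EnergyF`. -/
def jumpDensity (u : En n → ℝ) (x : En n) : ℝ≥0∞ :=
  ENNReal.ofReal ((upperLim u x) ^ 2 + (lowerLim u x) ^ 2)

lemma jumpDensity_congr {u v : En n → ℝ} {x : En n} (h : u =ᶠ[𝓝 x] v) :
    jumpDensity u x = jumpDensity v x := by
  rw [jumpDensity, jumpDensity, upperLim_congr h, lowerLim_congr h]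

lemma jumpDensity_le_two {u : En n → ℝ} (hu : LocallyIntegrable u)
    (hu01 : ∀ y, u y ∈ Icc (0 : ℝ) 1) (x : En n) : jumpDensity u x ≤ 2 := by
  have hupper := upperLim_mem_Icc (x := x) hu hu01
  have hlower := lowerLim_mem_Icc (x := x) hu hu01
  refine ENNReal.ofReal_le_of_le_toReal ?_
  rw [ENNReal.toReal_ofNat]
  linarith [pow_le_one₀ (n := 2) hupper.1 hupper.2, pow_le_one₀ (n := 2) hlower.1 hlower.2]

lemma mul_measure_le_setLIntegral_of_subset {X : Type*} [MeasurableSpace X] {μ : Measure X}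
    {f : X → ℝ≥0∞} {c : ℝ≥0∞} {S P : Set X} (hP : MeasurableSet P) (hSP : S ⊆ P)
    (hf : ∀ x ∈ P, c ≤ f x) : c * μ S ≤ ∫⁻ x in S, f x ∂μ := by
  rw [← setLIntegral_const]
  refine lintegral_mono_ae ?_
  filter_upwards [ae_restrict_of_ae_restrict_of_subset hSP (ae_restrict_mem hP)] with x hx
  exact hf x hx

-- `jumpSet u` is not known to be measurable, so the pointwise bound is integrated through the
-- measurable set of points at which the means of `u` do not tend to `0`.
lemma sq_mul_measure_le_setLIntegral_jumpDensity {u : En n → ℝ} {b δ : ℝ}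
    (hu : LocallyIntegrable u) (hb : ∀ y, u y ∈ Icc 0 b) (hδ : 0 ≤ δ)
    (hδu : ∀ᵐ y, u y = 0 ∨ δ ≤ u y) (μ : Measure (En n)) {S : Set (En n)} (hS : S ⊆ jumpSet u) :
    ENNReal.ofReal (δ ^ 2) * μ S ≤ ∫⁻ y in S, jumpDensity u y ∂μ := by
  refine mul_measure_le_setLIntegral_of_subset (P := {y | ¬ MeanTendstoZero u y})
    (measurableSet_meanTendstoZero hu).compl
    (fun y hy => not_meanTendstoZero_of_mem_jumpSet hu hb (hS hy)) fun y hy => ?_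
  refine ENNReal.ofReal_le_ofReal ?_
  calc δ ^ 2 ≤ upperLim u y ^ 2 :=
        pow_le_pow_left₀ hδ (le_upperLim_of_not_meanTendstoZero hu hb hδu hy) 2
    _ ≤ upperLim u y ^ 2 + lowerLim u y ^ 2 := le_add_of_nonneg_right (sq_nonneg _)

section Perimeter

variable {φ : En n → En n}

lemma lineDeriv_apply_eq_fderiv_apply {y : En n} (hφ : DifferentiableAt ℝ φ y) (v : En n)
    (i : Fin n) : lineDeriv ℝ (fun z => φ z i) y v = fderiv ℝ φ y v i := by
  have hcomp : HasFDerivAt (fun z => φ z i)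
      ((EuclideanSpace.proj i : En n →L[ℝ] ℝ).comp (fderiv ℝ φ y)) y :=
    (EuclideanSpace.proj i : En n →L[ℝ] ℝ).hasFDerivAt.comp y hφ.hasFDerivAt
  exact (hcomp.hasLineDerivAt v).lineDeriv

lemma continuous_fderiv_single_apply (hφ : ContDiff ℝ 1 φ) (i : Fin n) :
    Continuous fun y => fderiv ℝ φ y (EuclideanSpace.single i 1) i := by
  have hfderiv : Continuous (fderiv ℝ φ) := hφ.continuous_fderiv one_ne_zero
  exact (EuclideanSpace.proj i : En n →L[ℝ] ℝ).continuous.comp (hfderiv.clm_apply continuous_const)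

lemma hasCompactSupport_fderiv_single_apply (hc : HasCompactSupport φ) (i : Fin n) :
    HasCompactSupport fun y => fderiv ℝ φ y (EuclideanSpace.single i 1) i :=
  (hc.fderiv (𝕜 := ℝ)).comp_left
    (g := fun L : En n →L[ℝ] En n => L (EuclideanSpace.single i 1) i) (by simp)

lemma integrable_divg (hφ : ContDiff ℝ 1 φ) (hc : HasCompactSupport φ) : Integrable (divg φ) :=
  integrable_finsetSum _ fun i _ =>
    (continuous_fderiv_single_apply hφ i).integrable_of_hasCompactSupport
      (hasCompactSupport_fderiv_single_apply hc i)

variable {f : En n → ℝ} {K : ℝ≥0} {S : Set (En n)}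

lemma integral_mul_fderiv_single_apply_le (hφ : ContDiff ℝ 1 φ) (hc : HasCompactSupport φ)
    (hφ1 : ∀ y, ‖φ y‖ ≤ 1) (hf : LipschitzWith K f) (hS : volume S < ⊤)
    (hextr : ∀ y ∉ S, IsLocalExtr f y) (i : Fin n) :
    ∫ y, f y * fderiv ℝ φ y (EuclideanSpace.single i 1) i ≤ K * volume.real S := by
  have hci : HasCompactSupport fun y => φ y i :=
    hc.comp_left (g := fun w : En n => w i) (by simp)
  have hφi : ContDiff ℝ 1 fun y => φ y i := by fun_prop
  obtain ⟨D, hD⟩ := hφi.lipschitzWith_of_hasCompactSupport hci one_ne_zero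
  have hparts := hf.integral_lineDeriv_mul_eq (μ := volume) hD hci (-EuclideanSpace.single i 1)
  simp only [neg_neg, lineDeriv_apply_eq_fderiv_apply (hφ.differentiable one_ne_zero _),
    mul_comm _ (f _)] at hparts
  have hlineDeriv (y : En n) : ‖lineDeriv ℝ f y (-EuclideanSpace.single i 1)‖ ≤ K := by
    simpa only [norm_neg, PiLp.norm_single, norm_one, mul_one] using
      norm_lineDeriv_le_of_lipschitz ℝ hf (x₀ := y) (v := -EuclideanSpace.single i (1 : ℝ))
  calc ∫ y, f y * fderiv ℝ φ y (EuclideanSpace.single i 1) i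
      = ∫ y in S, lineDeriv ℝ f y (-EuclideanSpace.single i 1) * φ y i := by
        rw [setIntegral_eq_integral_of_forall_compl_eq_zero, hparts]
        intro y hy
        rw [(hextr y hy).lineDeriv_eq_zero, Pi.zero_apply, zero_mul]
    _ ≤ ‖∫ y in S, lineDeriv ℝ f y (-EuclideanSpace.single i 1) * φ y i‖ := le_abs_self _
    _ ≤ K * volume.real S := norm_setIntegral_le_of_norm_le_const hS fun y _ => by
        rw [norm_mul, ← mul_one (K : ℝ)]
        exact mul_le_mul (hlineDeriv y) ((PiLp.norm_apply_le (φ y) i).trans (hφ1 y))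
          (norm_nonneg _) K.coe_nonneg

lemma integral_mul_divg_le (hφ : ContDiff ℝ 1 φ) (hc : HasCompactSupport φ)
    (hφ1 : ∀ y, ‖φ y‖ ≤ 1) (hf : LipschitzWith K f) (hS : volume S < ⊤)
    (hextr : ∀ y ∉ S, IsLocalExtr f y) :
    ∫ y, f y * divg φ y ≤ n * (K * volume.real S) := by
  simp only [divg, Finset.mul_sum]
  have hint (i : Fin n) :
      Integrable fun y => f y * fderiv ℝ φ y (EuclideanSpace.single i 1) i :=
    (hf.continuous.mul (continuous_fderiv_single_apply hφ i)).integrable_of_hasCompactSupport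
      (hasCompactSupport_fderiv_single_apply hc i).mul_left
  rw [integral_finsetSum _ fun i _ => hint i]
  simpa using Finset.sum_le_card_nsmul Finset.univ _ _ fun i _ =>
    integral_mul_fderiv_single_apply_le hφ hc hφ1 hf hS hextr i

lemma isLocalExtr_thickenedIndicator {X : Type*} [PseudoEMetricSpace X] {ε : ℝ} (hε : 0 < ε)
    {A : Set X} {y : X} (hy : y ∉ thickening ε A \ A) :
    IsLocalExtr (fun z => (thickenedIndicator hε A z : ℝ)) y := by
  by_cases hyA : y ∈ A
  · refine .inr (.of_forall fun z => ?_)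
    simp only [thickenedIndicator_one hε A hyA]
    exact_mod_cast thickenedIndicator_le_one hε A z
  · refine .inl (.of_forall fun z => ?_)
    simp only [thickenedIndicator_zero hε A fun hy' => hy ⟨hy', hyA⟩]
    exact NNReal.coe_nonneg _

lemma tendsto_integral_thickenedIndicator_mul {A : Set (En n)} (hA : IsClosed A) {w : En n → ℝ}
    (hw : Integrable w) {ε : ℕ → ℝ} (hpos : ∀ k, 0 < ε k) (hε : Tendsto ε atTop (𝓝 0)) :
    Tendsto (fun k => ∫ y, (thickenedIndicator (hpos k) A y : ℝ) * w y) atTop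
      (𝓝 (∫ y, A.indicator (fun _ => (1 : ℝ)) y * w y)) := by
  refine tendsto_integral_of_dominated_convergence (fun y => ‖w y‖) (fun k => ?_) hw.norm
    (fun k => ae_of_all _ fun y => ?_) (ae_of_all _ fun y => ?_)
  · exact (NNReal.continuous_coe.comp (thickenedIndicator (hpos k) A).continuous
      ).aestronglyMeasurable.mul hw.aestronglyMeasurable
  · rw [norm_mul, NNReal.norm_eq]
    exact mul_le_of_le_one_left (norm_nonneg _)
      (by exact_mod_cast thickenedIndicator_le_one (hpos k) A y)
  · have hlim := tendsto_pi_nhds.1 (thickenedIndicator_tendsto_indicator_closure hpos hε A) y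
    rw [hA.closure_eq] at hlim
    refine Tendsto.mul_const _ ?_
    convert NNReal.tendsto_coe.2 hlim using 2
    by_cases hy : y ∈ A <;> simp [hy]

lemma varMeas_indicator_le_of_volume_thickening_sdiff_le {A : Set (En n)} (hA : IsClosed A)
    {C : ℝ≥0} (hC : ∀ᶠ ε in 𝓝[>] (0 : ℝ),
      volume (thickening ε A \ A) ≤ ENNReal.ofReal (C * ε)) :
    varMeas (A.indicator fun _ => (1 : ℝ)) univ ≤ ENNReal.ofReal (n * C) := by
  refine iSup_le ?_
  rintro ⟨φ, hφ, hc, -, hφ1⟩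
  refine ENNReal.ofReal_le_ofReal ?_
  have hφ' : ContDiff ℝ 1 φ := hφ.of_le (by simp)
  have hpos (k : ℕ) : (0 : ℝ) < 1 / (k + 1) := Nat.one_div_pos_of_nat
  have hlim := tendsto_one_div_add_atTop_nhds_zero_nat (𝕜 := ℝ)
  refine le_of_tendsto
    (tendsto_integral_thickenedIndicator_mul hA (integrable_divg hφ' hc) hpos hlim) ?_
  filter_upwards [(tendsto_nhdsWithin_iff.2 ⟨hlim, .of_forall hpos⟩).eventually hC] with k hk
  refine (integral_mul_divg_le hφ' hc hφ1
    (NNReal.isometry_coe.lipschitz.comp (lipschitzWith_thickenedIndicator (hpos k) A))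
    (hk.trans_lt ENNReal.ofReal_lt_top) fun y => isLocalExtr_thickenedIndicator (hpos k)).trans ?_
  have hvol : volume.real (thickening (1 / ((k : ℝ) + 1)) A \ A) ≤ C * (1 / (k + 1)) :=
    ENNReal.toReal_le_of_le_ofReal (mul_nonneg C.coe_nonneg (hpos k).le) hk
  gcongr
  rw [one_mul, NNReal.coe_inv, Real.coe_toNNReal _ (hpos k).le, inv_mul_le_iff₀ (hpos k)]
  linarith

lemma thickening_compl_ball_sdiff_subset {X : Type*} [PseudoMetricSpace X] (x : X) (r ε : ℝ) :
    thickening ε (ball x r)ᶜ \ (ball x r)ᶜ ⊆ ball x r \ ball x (r - ε) := by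
  rintro y ⟨hy, hyr⟩
  obtain ⟨z, hz, hyz⟩ := mem_thickening_iff.1 hy
  refine ⟨not_not.1 hyr, fun hyε => hz ?_⟩
  rw [mem_ball] at hyε ⊢
  linarith [dist_triangle_left z x y]

lemma volume_ball_sdiff_ball_sub_le (x : En n) {r ε : ℝ} (hε : 0 < ε) (hεr : ε < r) :
    volume (ball x r \ ball x (r - ε)) ≤
      ENNReal.ofReal (n * r ^ (n - 1) * volume.real (ball (0 : En n) 1) * ε) := by
  have hr : 0 < r := hε.trans hεr
  have hvol {s : ℝ} (hs : 0 < s) : volume.real (ball x s) =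
      s ^ n * volume.real (ball (0 : En n) 1) := by
    rw [measureReal_def, Measure.addHaar_ball_of_pos _ _ hs, finrank_euclideanSpace_fin,
      ENNReal.toReal_mul, ENNReal.toReal_ofReal (by positivity), measureReal_def]
  have hpow : r ^ n - (r - ε) ^ n ≤ ε * n * r ^ (n - 1) := by
    have h := (le_abs_self _).trans (abs_pow_sub_pow_le r (r - ε) n)
    rwa [_root_.sub_sub_cancel, abs_of_pos hε, abs_of_pos hr, abs_of_pos (sub_pos.2 hεr),
      max_eq_left (sub_le_self r hε.le)] at h
  rw [← ofReal_measureReal (measure_ne_top_of_subset sdiff_subset measure_ball_lt_top.ne)]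
  refine ENNReal.ofReal_le_ofReal ?_
  rw [measureReal_sdiff (ball_subset_ball (sub_le_self r hε.le)) measurableSet_ball
    measure_ball_lt_top.ne, hvol hr, hvol (sub_pos.2 hεr), ← sub_mul]
  calc (r ^ n - (r - ε) ^ n) * volume.real (ball (0 : En n) 1)
      ≤ ε * n * r ^ (n - 1) * volume.real (ball (0 : En n) 1) := by gcongr
    _ = n * r ^ (n - 1) * volume.real (ball (0 : En n) 1) * ε := by ring

lemma varMeas_indicator_compl_ball_lt_top (x : En n) {r : ℝ} (hr : 0 < r) :
    varMeas ((ball x r)ᶜ.indicator fun _ => (1 : ℝ)) univ < ⊤ := by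
  let C : ℝ≥0 := ⟨n * r ^ (n - 1) * volume.real (ball (0 : En n) 1), by positivity⟩
  refine (varMeas_indicator_le_of_volume_thickening_sdiff_le (C := C) isOpen_ball.isClosed_compl
    ?_).trans_lt ENNReal.ofReal_lt_top
  filter_upwards [Ioo_mem_nhdsGT hr] with ε hε
  exact (measure_mono (thickening_compl_ball_sdiff_subset x r ε)).trans
    (volume_ball_sdiff_ball_sub_le x hε.1 hε.2)

end Perimeter

section Sphere

lemma lipschitzOnWith_normalize {V : Type*} [NormedAddCommGroup V] [NormedSpace ℝ V] :
    LipschitzOnWith 2 (NormedSpace.normalize : V → V) {a | 1 ≤ ‖a‖} := by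
  refine LipschitzOnWith.of_dist_le_mul fun a (ha : 1 ≤ ‖a‖) b (hb : 1 ≤ ‖b‖) => ?_
  have ha0 : 0 < ‖a‖ := one_pos.trans_le ha
  have hb0 : 0 < ‖b‖ := one_pos.trans_le hb
  have hinv : ‖a‖⁻¹ ≤ 1 := inv_le_one_of_one_le₀ ha
  have hscale : ‖(‖a‖⁻¹ - ‖b‖⁻¹) • b‖ = ‖a‖⁻¹ * |‖b‖ - ‖a‖| := by
    rw [norm_smul, inv_sub_inv ha0.ne' hb0.ne', Real.norm_eq_abs, abs_div,
      abs_of_pos (mul_pos ha0 hb0)]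
    field_simp
  rw [dist_eq_norm, dist_eq_norm]
  calc ‖‖a‖⁻¹ • a - ‖b‖⁻¹ • b‖ = ‖‖a‖⁻¹ • (a - b) + (‖a‖⁻¹ - ‖b‖⁻¹) • b‖ := by
        rw [smul_sub, sub_smul, sub_add_sub_cancel]
    _ ≤ ‖‖a‖⁻¹ • (a - b)‖ + ‖(‖a‖⁻¹ - ‖b‖⁻¹) • b‖ := norm_add_le _ _
    _ = ‖a‖⁻¹ * ‖a - b‖ + ‖a‖⁻¹ * |‖b‖ - ‖a‖| := by
        rw [hscale, norm_smul, norm_inv, norm_norm]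
    _ ≤ 1 * ‖a - b‖ + 1 * ‖a - b‖ := by
        gcongr
        rw [norm_sub_rev]
        exact abs_norm_sub_norm_le b a
    _ = (2 : ℝ≥0) * ‖a - b‖ := by rw [NNReal.coe_ofNat]; ring

/-- The slice `{y i = s}` of the cube `[-1, 1]ᵐ⁺¹`; for `s = ± 1` these are its faces, whose
radial projections cover the unit sphere. -/
def cubeFace {m : ℕ} (i : Fin (m + 1)) (s : ℝ) : Set (En (m + 1)) :=
  {y | y i = s ∧ ∀ j, |y j| ≤ 1}

variable {m : ℕ}

lemma exists_lipschitzWith_toLp_insertNth (i : Fin (m + 1)) (s : ℝ) :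
    ∃ K, LipschitzWith K fun z : Fin m → ℝ => (WithLp.toLp 2 (i.insertNth s z) : En (m + 1)) := by
  have hinsert : LipschitzWith 1 fun z : Fin m → ℝ => (i.insertNth s z : Fin (m + 1) → ℝ) :=
    LipschitzWith.of_dist_le_mul fun z w => by
      simp [Fin.dist_insertNth_insertNth]
  exact ⟨_, (PiLp.lipschitzWith_toLp 2 _).comp hinsert⟩

lemma hausdorffMeasure_cubeFace_lt_top (i : Fin (m + 1)) (s : ℝ) :
    μH[m] (cubeFace i s) < ⊤ := by
  have hsub : cubeFace i s ⊆
      (fun z : Fin m → ℝ => WithLp.toLp 2 (i.insertNth s z)) '' closedBall 0 1 := by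
    rintro y ⟨rfl, hy⟩
    refine ⟨i.removeNth y, ?_, ?_⟩
    · rw [mem_closedBall_zero_iff, pi_norm_le_iff_of_nonneg zero_le_one]
      exact fun j => hy _
    · simp
  have hvol : (μH[m] : Measure (Fin m → ℝ)) = volume := by
    simpa only [Fintype.card_fin] using hausdorffMeasure_pi_real (ι := Fin m)
  obtain ⟨K, hK⟩ := exists_lipschitzWith_toLp_insertNth i s
  refine (measure_mono hsub).trans_lt
    ((hK.hausdorffMeasure_image_le (Nat.cast_nonneg m) _).trans_lt ?_)
  rw [hvol]
  exact ENNReal.mul_lt_top (ENNReal.rpow_lt_top_of_nonneg (Nat.cast_nonneg m) ENNReal.coe_ne_top)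
    measure_closedBall_lt_top

lemma one_le_norm_of_mem_cubeFace {i : Fin (m + 1)} {s : ℝ} (hs : |s| = 1) {y : En (m + 1)}
    (hy : y ∈ cubeFace i s) : 1 ≤ ‖y‖ := by
  rw [← hs, ← hy.1]
  exact PiLp.norm_apply_le y i

lemma hausdorffMeasure_normalize_image_cubeFace_lt_top (i : Fin (m + 1)) {s : ℝ} (hs : |s| = 1) :
    μH[m] (NormedSpace.normalize '' cubeFace i s) < ⊤ :=
  ((lipschitzOnWith_normalize.mono fun _ => one_le_norm_of_mem_cubeFace hs
    ).hausdorffMeasure_image_le (Nat.cast_nonneg m)).trans_lt <|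
  ENNReal.mul_lt_top (ENNReal.rpow_lt_top_of_nonneg (Nat.cast_nonneg m) ENNReal.coe_ne_top)
    (hausdorffMeasure_cubeFace_lt_top i s)

lemma sphere_subset_iUnion_normalize_image_cubeFace : sphere (0 : En (m + 1)) 1 ⊆
    ⋃ i, NormedSpace.normalize '' cubeFace i 1 ∪ NormedSpace.normalize '' cubeFace i (-1) := by
  intro y hy
  have hy1 : ‖y‖ = 1 := mem_sphere_zero_iff_norm.1 hy
  obtain ⟨i, -, hi⟩ := Finset.exists_max_image Finset.univ (fun j => |y j|) Finset.univ_nonempty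
  have hpos : 0 < |y i| := by
    refine (abs_nonneg _).lt_of_ne' fun h0 => one_ne_zero (α := ℝ) ?_
    have hzero : y = 0 := by
      ext j
      exact abs_nonpos_iff.1 ((hi j (Finset.mem_univ j)).trans_eq h0)
    rw [← hy1, hzero, norm_zero]
  have hproj : NormedSpace.normalize (|y i|⁻¹ • y) = y := by
    rw [NormedSpace.normalize_smul_of_pos (inv_pos.2 hpos),
      NormedSpace.normalize_eq_self_of_norm_eq_one hy1]
  have hcube (j : Fin (m + 1)) : |(|y i|⁻¹ • y) j| ≤ 1 := by
    rw [PiLp.smul_apply, smul_eq_mul, abs_mul, abs_inv, abs_abs, inv_mul_le_iff₀ hpos, mul_one]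
    exact hi j (Finset.mem_univ j)
  refine mem_iUnion.2 ⟨i, ?_⟩
  rcases abs_choice (y i) with h | h
  · exact .inl ⟨_, ⟨by rw [PiLp.smul_apply, smul_eq_mul, h, inv_mul_cancel₀ (h ▸ hpos.ne')], hcube⟩,
      hproj⟩
  · exact .inr ⟨_, ⟨by
      rw [PiLp.smul_apply, smul_eq_mul, inv_mul_eq_iff_eq_mul₀ hpos.ne', h, neg_mul_neg, mul_one],
      hcube⟩, hproj⟩

lemma hausdorffMeasure_unitSphere_lt_top (n : ℕ) :
    μH[(n : ℝ) - 1] (sphere (0 : En n) 1) < ⊤ := by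
  cases n with
  | zero => simp [sphere_eq_empty_of_subsingleton]
  | succ m =>
    rw [Nat.cast_succ, add_sub_cancel_right]
    refine (measure_mono sphere_subset_iUnion_normalize_image_cubeFace).trans_lt
      ((measure_iUnion_fintype_le _ _).trans_lt (ENNReal.sum_lt_top.2 fun i _ => ?_))
    exact measure_union_lt_top (hausdorffMeasure_normalize_image_cubeFace_lt_top i (by simp))
      (hausdorffMeasure_normalize_image_cubeFace_lt_top i (by simp))

open Pointwise in
lemma hausdorffMeasure_sphere_eq_rpow_mul {E : Type*} [NormedAddCommGroup E] [NormedSpace ℝ E]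
    [MeasurableSpace E] [BorelSpace E] {d : ℝ} (hd : 0 ≤ d) (x : E) {r : ℝ} (hr : 0 < r) :
    μH[d] (sphere x r) = ENNReal.ofReal (r ^ d) * μH[d] (sphere (0 : E) 1) := by
  have hsphere : sphere x r = x +ᵥ r • sphere (0 : E) 1 := by
    rw [smul_sphere' hr.ne', vadd_sphere, smul_zero, vadd_eq_add, add_zero, mul_one,
      Real.norm_of_nonneg hr.le]
  rw [hsphere, hausdorffMeasure_vadd _ (.inl hd), Measure.hausdorffMeasure_smul₀ hd hr.ne',
    ENNReal.smul_def, smul_eq_mul, ENNReal.coe_rpow_of_nonneg _ hd, ← enorm_eq_nnnorm,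
    Real.enorm_of_nonneg hr.le, ENNReal.ofReal_rpow_of_pos hr]

lemma hausdorffMeasure_sphere (x : En n) {r : ℝ} (hr : 0 < r) :
    μH[(n : ℝ) - 1] (sphere x r) =
      ENNReal.ofReal (r ^ (n - 1)) * μH[(n : ℝ) - 1] (sphere (0 : En n) 1) := by
  cases n with
  | zero => simp [sphere_eq_empty_of_subsingleton, hr.ne']
  | succ m =>
    rw [Nat.cast_succ, add_sub_cancel_right, Nat.add_sub_cancel,
      hausdorffMeasure_sphere_eq_rpow_mul (Nat.cast_nonneg m) x hr, Real.rpow_natCast]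

end Sphere

section InwardMinimizer

/-- `u`, with approximate gradient `g`, is an inward minimizer of the energy: cutting `u` down to a
set of finite perimeter containing `Ω` does not decrease `EnergyF`. -/
def IsInwardMinimizer (u : En n → ℝ) (g : En n → En n) (Ω : Set (En n)) : Prop :=
  ∀ (A : Set (En n)) (gA : En n → En n), MeasurableSet A → Ω ⊆ A →
    varMeas (A.indicator fun _ => (1 : ℝ)) univ < ⊤ →
    IsApproxGradient (fun x => u x * A.indicator (fun _ => (1 : ℝ)) x) gA →
    EnergyF u g Ω ≤ EnergyF (fun x => u x * A.indicator (fun _ => (1 : ℝ)) x) gA Ω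

lemma indicator_eventuallyEq_self {X M : Type*} [TopologicalSpace X] [Zero M] {A : Set X} {x : X}
    (hx : x ∈ interior A) (f : X → M) : A.indicator f =ᶠ[𝓝 x] f :=
  eqOn_indicator.eventuallyEq_of_mem (mem_interior_iff_mem_nhds.1 hx)

lemma indicator_eventuallyEq_zero {X M : Type*} [TopologicalSpace X] [Zero M] {A : Set X} {x : X}
    (hx : x ∈ interior Aᶜ) (f : X → M) : A.indicator f =ᶠ[𝓝 x] fun _ => 0 :=
  eqOn_indicator'.eventuallyEq_of_mem (mem_interior_iff_mem_nhds.1 hx)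

lemma mem_interior_compl_of_notMem {X : Type*} [TopologicalSpace X] {A : Set X} {x : X}
    (hxA : x ∉ interior A) (hx : x ∉ frontier A) : x ∈ interior Aᶜ := by
  rw [interior_compl]
  exact fun hcl => hx ⟨hcl, hxA⟩

variable {u : En n → ℝ} {g : En n → En n} {Ω A : Set (En n)}

lemma IsApproxGradient.indicator (hg : IsApproxGradient u g) (hA : volume (frontier A) = 0) :
    IsApproxGradient (A.indicator u) (A.indicator g) := by
  unfold IsApproxGradient at hg ⊢
  filter_upwards [hg, measure_eq_zero_iff_ae_notMem.1 hA] with x hx hfrontier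
  by_cases hxA : x ∈ interior A
  · refine hx.congr' ((setIntegral_ball_eventuallyEq ?_).div EventuallyEq.rfl)
    filter_upwards [indicator_eventuallyEq_self hxA u] with y hy
    rw [hy, indicator_of_mem (interior_subset hxA), indicator_of_mem (interior_subset hxA)]
  · have hxc : x ∈ interior Aᶜ := mem_interior_compl_of_notMem hxA hfrontier
    have hzero : (fun y => |A.indicator u y - A.indicator u x - ⟪A.indicator g x, y - x⟫|)
        =ᶠ[𝓝 x] fun _ => 0 := by
      filter_upwards [indicator_eventuallyEq_zero hxc u] with y hy
      rw [hy, indicator_of_notMem (interior_subset hxc), indicator_of_notMem (interior_subset hxc),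
        inner_zero_left, sub_zero, sub_zero, abs_zero]
    refine Tendsto.congr' ((setIntegral_ball_eventuallyEq hzero.symm).div EventuallyEq.rfl) ?_
    simp [Pi.div_def]

lemma jumpSet_indicator_sdiff_interior_subset_frontier :
    jumpSet (A.indicator u) \ interior A ⊆ frontier A := by
  rintro x ⟨hx, hxA⟩
  by_contra hfrontier
  exact notMem_jumpSet_of_eventuallyEq_const
    (indicator_eventuallyEq_zero (mem_interior_compl_of_notMem hxA hfrontier) u) hx

lemma setLIntegral_jumpDensity_indicator_inter_interior (μ : Measure (En n)) :
    ∫⁻ x in jumpSet (A.indicator u) ∩ interior A, jumpDensity (A.indicator u) x ∂μ =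
      ∫⁻ x in jumpSet u ∩ interior A, jumpDensity u x ∂μ := by
  have hjump : jumpSet (A.indicator u) ∩ interior A = jumpSet u ∩ interior A := by
    ext x
    exact and_congr_left fun hx => mem_jumpSet_congr (indicator_eventuallyEq_self hx u)
  rw [hjump]
  refine lintegral_congr_ae ?_
  filter_upwards [ae_restrict_of_ae_restrict_of_subset inter_subset_right
    (ae_restrict_mem isOpen_interior.measurableSet)] with x hx
  exact jumpDensity_congr (indicator_eventuallyEq_self hx u)

lemma setLIntegral_jumpDensity_indicator_sdiff_interior_le (hu : LocallyIntegrable u)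
    (hu01 : ∀ x, u x ∈ Icc (0 : ℝ) 1) (hA : MeasurableSet A) (μ : Measure (En n)) :
    ∫⁻ x in jumpSet (A.indicator u) \ interior A, jumpDensity (A.indicator u) x ∂μ ≤
      2 * μ (frontier A) := by
  have hmem (x : En n) : A.indicator u x ∈ Icc (0 : ℝ) 1 := by
    by_cases hx : x ∈ A
    · rw [indicator_of_mem hx]
      exact hu01 x
    · rw [indicator_of_notMem hx]
      exact ⟨le_rfl, zero_le_one⟩
  calc ∫⁻ x in jumpSet (A.indicator u) \ interior A, jumpDensity (A.indicator u) x ∂μ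
      ≤ ∫⁻ _ in jumpSet (A.indicator u) \ interior A, 2 ∂μ :=
        lintegral_mono fun x => jumpDensity_le_two (hu.indicator hA) hmem x
    _ = 2 * μ (jumpSet (A.indicator u) \ interior A) := setLIntegral_const _ _
    _ ≤ 2 * μ (frontier A) := by
        gcongr
        exact jumpSet_indicator_sdiff_interior_subset_frontier

lemma IsInwardMinimizer.setLIntegral_jumpDensity_le (hmin : IsInwardMinimizer u g Ω)
    (hg : IsApproxGradient u g) (hfin : EnergyF u g Ω ≠ ⊤) (hu0 : 0 ≤ u) (hA : MeasurableSet A)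
    (hΩA : Ω ⊆ A) (hper : varMeas (A.indicator fun _ => (1 : ℝ)) univ < ⊤)
    (hfrontier : volume (frontier A) = 0) :
    ∫⁻ x in jumpSet u, jumpDensity u x ∂μH[(n : ℝ) - 1] ≤
      ∫⁻ x in jumpSet (A.indicator u), jumpDensity (A.indicator u) x ∂μH[(n : ℝ) - 1] := by
  have hcut : (fun x => u x * A.indicator (fun _ => (1 : ℝ)) x) = A.indicator u := by
    ext x
    simp only [← indicator_mul_right, mul_one]
  have henergy := hmin A (A.indicator g) hA hΩA hper (by rw [hcut]; exact hg.indicator hfrontier)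
  rw [hcut] at henergy
  have hgrad : ∫⁻ x, ENNReal.ofReal (‖A.indicator g x‖ ^ 2) ≤ ∫⁻ x, ENNReal.ofReal (‖g x‖ ^ 2) :=
    lintegral_mono fun x => ENNReal.ofReal_le_ofReal <|
      pow_le_pow_left₀ (norm_nonneg _) (norm_indicator_le_norm_self g x) 2
  have hvol : volume ({x | 0 < A.indicator u x} \ Ω) ≤ volume ({x | 0 < u x} \ Ω) :=
    measure_mono <| sdiff_subset_sdiff_left fun x hx =>
      hx.trans_le (indicator_le_self' (fun x _ => hu0 x) x)
  obtain ⟨⟨hgradfin, -⟩, hvolfin⟩ := ENNReal.add_ne_top.1 hfin |>.imp_left ENNReal.add_ne_top.1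
  have hle := henergy.trans (add_le_add (add_le_add_left hgrad _) hvol)
  exact (ENNReal.add_le_add_iff_left hgradfin).1 ((ENNReal.add_le_add_iff_right hvolfin).1 hle)

lemma IsInwardMinimizer.setLIntegral_jumpDensity_sdiff_interior_le
    (hmin : IsInwardMinimizer u g Ω) (hg : IsApproxGradient u g) (hfin : EnergyF u g Ω ≠ ⊤)
    (hu : LocallyIntegrable u) (hu01 : ∀ x, u x ∈ Icc (0 : ℝ) 1) (hA : MeasurableSet A)
    (hΩA : Ω ⊆ A) (hper : varMeas (A.indicator fun _ => (1 : ℝ)) univ < ⊤)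
    (hfrontier : volume (frontier A) = 0) :
    ∫⁻ x in jumpSet u \ interior A, jumpDensity u x ∂μH[(n : ℝ) - 1] ≤
      2 * μH[(n : ℝ) - 1] (frontier A) := by
  have hcompare := hmin.setLIntegral_jumpDensity_le hg hfin (fun x => (hu01 x).1) hA hΩA hper
    hfrontier
  have hmeas : MeasurableSet (interior A) := isOpen_interior.measurableSet
  rw [← lintegral_inter_add_sdiff _ (jumpSet u) hmeas,
    ← lintegral_inter_add_sdiff _ (jumpSet (A.indicator u)) hmeas,
    setLIntegral_jumpDensity_indicator_inter_interior] at hcompare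
  have hinterior : ∫⁻ x in jumpSet u ∩ interior A, jumpDensity u x ∂μH[(n : ℝ) - 1] ≠ ⊤ :=
    ne_top_of_le_ne_top (ENNReal.add_ne_top.1 (ENNReal.add_ne_top.1 hfin).1).2
      (lintegral_mono_set inter_subset_left)
  exact ((ENNReal.add_le_add_iff_left hinterior).1 hcompare).trans
    (setLIntegral_jumpDensity_indicator_sdiff_interior_le hu hu01 hA _)

lemma IsInwardMinimizer.sq_mul_hausdorffMeasure_jumpSet_inter_ball_le
    (hmin : IsInwardMinimizer u g Ω) (hg : IsApproxGradient u g) (hfin : EnergyF u g Ω ≠ ⊤)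
    (hu : LocallyIntegrable u) (hu01 : ∀ x, u x ∈ Icc (0 : ℝ) 1) {δ : ℝ} (hδ : 0 ≤ δ)
    (hδu : ∀ᵐ x, u x = 0 ∨ δ ≤ u x) {x : En n} {r : ℝ} (hr : 0 < r) (hball : ball x r ⊆ Ωᶜ) :
    ENNReal.ofReal (δ ^ 2) * μH[(n : ℝ) - 1] (jumpSet u ∩ ball x r) ≤
      2 * μH[(n : ℝ) - 1] (sphere x r) := by
  have hfrontier : frontier (ball x r)ᶜ = sphere x r := by
    rw [frontier_compl, frontier_ball x hr.ne']
  have hsub : jumpSet u ∩ ball x r ⊆ jumpSet u \ interior (ball x r)ᶜ :=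
    fun y hy => ⟨hy.1, fun hyA => interior_subset hyA hy.2⟩
  calc ENNReal.ofReal (δ ^ 2) * μH[(n : ℝ) - 1] (jumpSet u ∩ ball x r)
      ≤ ∫⁻ y in jumpSet u ∩ ball x r, jumpDensity u y ∂μH[(n : ℝ) - 1] :=
        sq_mul_measure_le_setLIntegral_jumpDensity hu hu01 hδ hδu _ inter_subset_left
    _ ≤ ∫⁻ y in jumpSet u \ interior (ball x r)ᶜ, jumpDensity u y ∂μH[(n : ℝ) - 1] :=
        lintegral_mono_set hsub
    _ ≤ 2 * μH[(n : ℝ) - 1] (frontier (ball x r)ᶜ) :=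
        hmin.setLIntegral_jumpDensity_sdiff_interior_le hg hfin hu hu01 measurableSet_ball.compl
          (subset_compl_comm.1 hball) (varMeas_indicator_compl_ball_lt_top x hr)
          (by rw [hfrontier, Measure.addHaar_sphere_of_ne_zero volume x hr.ne'])
    _ = 2 * μH[(n : ℝ) - 1] (sphere x r) := by rw [hfrontier]

end InwardMinimizer

theorem stmt_7_general (n : ℕ) :
    ∃ C : ℝ, 0 < C ∧
    ∀ (u : En n → ℝ) (g : En n → En n) (Ω : Set (En n)) (δ : ℝ),
      AEStronglyMeasurable u → (∀ x, u x ∈ Icc (0 : ℝ) 1) →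
      IsApproxGradient u g →
      0 < δ → (∀ᵐ x, u x = 0 ∨ δ ≤ u x) →
      EnergyF u g Ω ≠ ⊤ →
      IsInwardMinimizer u g Ω →
      ∀ (x : En n) (r : ℝ), 0 < r → ball x r ⊆ Ωᶜ →
        μH[(n : ℝ) - 1] (jumpSet u ∩ ball x r) ≤ ENNReal.ofReal (C / δ ^ 2 * r ^ (n - 1)) := by
  set K : ℝ := (μH[(n : ℝ) - 1] (sphere (0 : En n) 1)).toReal with hK
  have hK0 : 0 ≤ K := ENNReal.toReal_nonneg
  refine ⟨2 * K + 1, by linarith, ?_⟩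
  intro u g Ω δ hu hu01 hg hδ hδu hfin hmin x r hr hball
  have hsphere : μH[(n : ℝ) - 1] (sphere x r) = ENNReal.ofReal (r ^ (n - 1) * K) := by
    rw [hausdorffMeasure_sphere x hr, ENNReal.ofReal_mul (by positivity), hK,
      ENNReal.ofReal_toReal (hausdorffMeasure_unitSphere_lt_top n).ne]
  have hbound := hmin.sq_mul_hausdorffMeasure_jumpSet_inter_ball_le hg hfin
    (locallyIntegrable_of_mem_Icc hu hu01) hu01 hδ.le hδu hr hball
  rw [hsphere, mul_comm, ← ENNReal.le_div_iff_mul_le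
    (.inl (ENNReal.ofReal_pos.2 (by positivity)).ne') (.inl ENNReal.ofReal_ne_top)] at hbound
  calc μH[(n : ℝ) - 1] (jumpSet u ∩ ball x r)
      ≤ 2 * ENNReal.ofReal (r ^ (n - 1) * K) / ENNReal.ofReal (δ ^ 2) := hbound
    _ = ENNReal.ofReal (2 * K / δ ^ 2 * r ^ (n - 1)) := by
        rw [← ENNReal.ofReal_ofNat, ← ENNReal.ofReal_mul zero_le_two,
          ← ENNReal.ofReal_div_of_pos (by positivity)]
        ring_nf
    _ ≤ ENNReal.ofReal ((2 * K + 1) / δ ^ 2 * r ^ (n - 1)) := by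
        gcongr
        exact le_add_of_nonneg_right zero_le_one

/-- If `u ∈ SBV(ℝⁿ)`, `0 ≤ u ≤ 1`, takes values in `{0} ∪ [δ,1]` a.e.
and is an inward minimizer of `F` (i.e. `F(u) ≤ F(u·1_A)` for every set of finite
perimeter `A ⊇ Ω`), then `H^{n-1}(J_u ∩ B_r(x)) ≤ C(n) δ⁻² r^{n-1}` for every ball
`B_r(x) ⊆ ℝⁿ \ Ω`. -/
theorem stmt_7 (n : ℕ) :
    ∃ C : ℝ, 0 < C ∧
    ∀ (u : En n → ℝ) (g : En n → En n) (Ω : Set (En n)) (δ : ℝ),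
      Integrable u → (∀ x, u x ∈ Icc (0:ℝ) 1) → varMeas u Set.univ < ⊤ →
      IsApproxGradient u g →
      0 < δ → (∀ᵐ x, u x = 0 ∨ δ ≤ u x) →
      EnergyF u g Ω ≠ ⊤ →
      (∀ (A : Set (En n)) (gA : En n → En n), MeasurableSet A → Ω ⊆ A →
        varMeas (A.indicator fun _ => (1:ℝ)) Set.univ < ⊤ →
        IsApproxGradient (fun x => u x * A.indicator (fun _ => (1:ℝ)) x) gA →
        EnergyF u g Ω ≤ EnergyF (fun x => u x * A.indicator (fun _ => (1:ℝ)) x) gA Ω) →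
      ∀ (x : En n) (r : ℝ), 0 < r → ball x r ⊆ Ωᶜ →
        μH[(n:ℝ)-1] (jumpSet u ∩ ball x r) ≤ ENNReal.ofReal (C / δ^2 * r^(n-1)) := by
  obtain ⟨C, hC, h⟩ := stmt_7_general n
  exact ⟨C, hC, fun u g Ω δ hu hu01 _ => h u g Ω δ hu.aestronglyMeasurable hu01⟩
end
end

section
/- Let U be a bounded convex open subset of R², and suppose that for some constant c₀ > 0 every orthogonal projection of U onto a line has length at least c₀ times the perimeter of U. Then there exists an ellipse Q with Q ⊆ U ⊆ 2Q (the dilate of Q about its center by factor 2) whose eccentricity is bounded away from 1 by a constant depending only on c₀. -/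
open MeasureTheory Metric Set
open scoped Topology ENNReal RealInnerProductSpace

/-!
Take an ellipsoid of maximal volume inside the closure of `U` and normalise it to the unit ball
of an `n`-dimensional space. If `U` had a point at distance more than `n` from the centre, the
convex hull of the ball and that point would contain an ellipsoid of larger volume (stretched
towards the point, shifted and slightly thinned); this is John's theorem `Q ⊆ U ⊆ n Q`.

The projection of `U` in the direction of a shortest semi-axis of `Q` has length at most `2 n`
times that semi-axis, while the diameter of `U` is at least twice the longest semi-axis. In the
plane the perimeter dominates the diameter, because the projection of the boundary onto any line
covers the projection of `U`. Hence the hypothesis bounds the ratio of the semi-axes from below.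
For this the perimeter has to be finite: the boundary of `U` is the 1-Lipschitz image, under the
nearest-point projection, of a circle around `U`.
-/

section SupportFunction

variable {E : Type*} [NormedAddCommGroup E] [InnerProductSpace ℝ E]

theorem mem_of_forall_inner_le_max [CompleteSpace E] {K : Set E} (hK_closed : IsClosed K)
    (hK : Convex ℝ K) (hball : closedBall 0 1 ⊆ K) {p x : E} (hp : p ∈ K)
    (hx : ∀ w, ⟪w, x⟫ ≤ max ‖w‖ ⟪w, p⟫) : x ∈ K := by
  by_contra hxK
  obtain ⟨f, u, hf, hu⟩ := geometric_hahn_banach_closed_point hK hK_closed hxK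
  obtain ⟨w, rfl⟩ := (InnerProductSpace.toDual ℝ E).surjective f
  simp only [InnerProductSpace.toDual_apply_apply] at hf hu
  have norm_lt : ‖w‖ < u := by
    have hunit : ‖w‖⁻¹ • w ∈ closedBall (0 : E) 1 := by
      simpa [norm_smul] using inv_mul_le_one (a := ‖w‖)
    simpa [inner_smul_right, real_inner_self_eq_norm_sq, pow_two, ← mul_assoc] using
      hf _ (hball hunit)
  exact (hu.trans_le (hx w)).not_gt (max_lt norm_lt (hf p hp))

end SupportFunction

section AxialStretch

variable {E : Type*} [NormedAddCommGroup E] [InnerProductSpace ℝ E]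

/-- For a unit vector `e`, the self-adjoint map multiplying the line `ℝ e` by `a` and its
orthogonal complement by `b`; it produces the ellipsoids of revolution about the axis `e`. -/
noncomputable def axialStretch (e : E) (a b : ℝ) : E →L[ℝ] E :=
  b • ContinuousLinearMap.id ℝ E + (a - b) • (innerSL ℝ e).smulRight e

theorem axialStretch_apply (e : E) (a b : ℝ) (v : E) :
    axialStretch e a b v = b • v + ((a - b) * ⟪e, v⟫) • e := by
  simp [axialStretch, mul_smul]

theorem inner_axialStretch_right (e : E) (a b : ℝ) (w v : E) :
    ⟪w, axialStretch e a b v⟫ = ⟪axialStretch e a b w, v⟫ := by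
  simp only [axialStretch_apply, inner_add_left, inner_add_right, real_inner_smul_left,
    real_inner_smul_right, real_inner_comm e w]
  ring

theorem norm_axialStretch_sq {e : E} (he : ‖e‖ = 1) (a b : ℝ) (w : E) :
    ‖axialStretch e a b w‖ ^ 2 = b ^ 2 * ‖w‖ ^ 2 + (a ^ 2 - b ^ 2) * ⟪w, e⟫ ^ 2 := by
  simp only [← real_inner_self_eq_norm_sq, axialStretch_apply, inner_add_left, inner_add_right,
    real_inner_smul_left, real_inner_smul_right, real_inner_comm w e,
    inner_self_eq_one_of_norm_eq_one (𝕜 := ℝ) he]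
  ring

theorem det_axialStretch [FiniteDimensional ℝ E] {e : E} (he : ‖e‖ = 1) (a : ℝ) {b : ℝ}
    (hb : b ≠ 0) :
    (axialStretch e a b).det = a * b ^ (Module.finrank ℝ E - 1) := by
  have : Nontrivial E := nontrivial_of_ne e 0 (norm_ne_zero_iff.1 (by simp [he]))
  have eq_smul_transvection : (axialStretch e a b : E →ₗ[ℝ] E) =
      b • LinearMap.transvection (((a - b) / b) • innerₛₗ ℝ e) e := by
    ext v
    simp only [ContinuousLinearMap.coe_coe, axialStretch_apply, LinearMap.smul_apply,
      LinearMap.transvection.apply, innerₛₗ_apply_apply, smul_add, smul_smul, smul_eq_mul]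
    field_simp
  rw [ContinuousLinearMap.det, eq_smul_transvection, LinearMap.det_smul,
    LinearMap.transvection.det]
  obtain ⟨m, hm⟩ := Nat.exists_eq_add_one.2 (Module.finrank_pos (R := ℝ) (M := E))
  simp only [hm, LinearMap.smul_apply, innerₛₗ_apply_apply,
    inner_self_eq_one_of_norm_eq_one (𝕜 := ℝ) he, add_tsub_cancel_right, smul_eq_mul]
  field_simp
  ring

end AxialStretch

section ScalarEstimates

-- To first order in `s`, the product `(1 + s) * b ^ m` is `1 + s * (1 - m / (d - 1))`, so a small
-- stretch gains volume exactly when `m + 1 < d`.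
theorem exists_axis_lengths_one_lt_mul_pow {d : ℝ} {m : ℕ} (hd : m + 1 < d) :
    ∃ s b : ℝ, 0 < s ∧ 0 < b ∧ b ^ 2 * (d - 1) = d - 1 - 2 * s ∧ 1 < (1 + s) * b ^ m := by
  obtain ⟨c, rfl⟩ : ∃ c, d = c + 1 := ⟨d - 1, by ring⟩
  have hmc : 0 < c - m := by linarith
  have hc : 0 < c := m.cast_nonneg.trans_lt (sub_pos.1 hmc)
  obtain ⟨s, hs_eq⟩ : ∃ s, s * (2 * (m + 2)) = c - m := ⟨(c - m) / (2 * (m + 2)), by field_simp⟩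
  have hs : 0 < s := pos_of_mul_pos_left (hs_eq ▸ hmc) (by positivity)
  have hsc : 2 * s / c < 1 := by
    rw [div_lt_one hc]
    nlinarith
  have hb_sq : √(1 - 2 * s / c) ^ 2 = 1 - 2 * s / c := Real.sq_sqrt (by linarith)
  refine ⟨s, √(1 - 2 * s / c), hs, Real.sqrt_pos.2 (by linarith), ?_, ?_⟩
  · rw [hb_sq]
    field_simp
    ring
  · have bernoulli : 1 - m * (2 * s / c) ≤ (1 - 2 * s / c) ^ m := by
      simpa [sub_eq_add_neg] using one_add_mul_le_pow (a := -(2 * s / c)) (by linarith) m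
    refine lt_of_pow_lt_pow_left₀ 2 (by positivity) ?_
    calc (1 : ℝ) ^ 2 < 1 + 2 * s / c * (c - m - 2 * m * s) := by
          have : 0 < c - m - 2 * m * s := by linarith
          rw [one_pow, lt_add_iff_pos_right]
          positivity
      _ = (1 + 2 * s) * (1 - m * (2 * s / c)) := by
          field_simp
          ring
      _ ≤ (1 + s) ^ 2 * (1 - 2 * s / c) ^ m := by
          have : 0 ≤ (1 - 2 * s / c) ^ m := pow_nonneg (by linarith) m
          nlinarith [mul_nonneg (sq_nonneg s) this]
      _ = ((1 + s) * √(1 - 2 * s / c) ^ m) ^ 2 := by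
          rw [mul_pow, ← pow_mul, mul_comm m 2, pow_mul, hb_sq]

-- With `r = ‖w‖`, `t = ⟪w, e⟫` and `X = ‖axialStretch e (1 + s) b w‖`, the two sides are the
-- support functions at `w` of the ellipsoid with centre `s • e` and semi-axes `1 + s` along `e` and
-- `b` across, and of the convex hull of the unit ball and `d • e`. The relation between `b` and `s`
-- makes the ellipsoid tangent to the cone from `d • e` over the ball.
theorem mul_add_le_max_of_sq_le {d s b r t X : ℝ} (hd : 1 < d) (hs : 0 < s)
    (hb : b ^ 2 * (d - 1) = d - 1 - 2 * s) (ht : |t| ≤ r)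
    (hX : X ^ 2 ≤ b ^ 2 * r ^ 2 + ((1 + s) ^ 2 - b ^ 2) * t ^ 2) :
    s * t + X ≤ max r (d * t) := by
  obtain ⟨hrt, htr⟩ := abs_le.1 ht
  have hd' : 0 < d - 1 := sub_pos.2 hd
  have hsd : 2 * s ≤ d - 1 := by nlinarith [mul_nonneg (sq_nonneg b) hd'.le]
  have hb_sq : b ^ 2 = 1 - 2 * s / (d - 1) := by
    field_simp
    linarith
  rcases le_total (d * t) r with hdt | hdt
  · have hst : 0 ≤ r - s * t := by nlinarith
    have hX_sq : X ^ 2 ≤ (r - s * t) ^ 2 := by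
      have gap : (r - s * t) ^ 2 - (b ^ 2 * r ^ 2 + ((1 + s) ^ 2 - b ^ 2) * t ^ 2)
          = s * (2 / (d - 1)) * ((r + t) * (r - d * t)) := by
        rw [hb_sq]
        field_simp
        ring
      have : 0 ≤ s * (2 / (d - 1)) * ((r + t) * (r - d * t)) :=
        mul_nonneg (by positivity) (mul_nonneg (by linarith) (by linarith))
      linarith
    linarith [le_max_left r (d * t), le_of_abs_le (abs_le_of_sq_le_sq hX_sq hst)]
  · have ht0 : 0 ≤ t := by nlinarith
    have hst : 0 ≤ d * t - s * t := by nlinarith [ht0]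
    have hX_sq : X ^ 2 ≤ (d * t - s * t) ^ 2 := by
      have gap : (d * t - s * t) ^ 2 - (b ^ 2 * r ^ 2 + ((1 + s) ^ 2 - b ^ 2) * t ^ 2)
          = b ^ 2 * ((d * t - r) * (d * t + r)) := by
        rw [hb_sq]
        field_simp
        ring
      have : 0 ≤ b ^ 2 * ((d * t - r) * (d * t + r)) :=
        mul_nonneg (sq_nonneg b) (mul_nonneg (by linarith) (by linarith))
      linarith
    linarith [le_max_right r (d * t), le_of_abs_le (abs_le_of_sq_le_sq hX_sq hst)]

end ScalarEstimates

section Ellipsoid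

variable {E : Type*} [NormedAddCommGroup E] [NormedSpace ℝ E]

/-- The closed ellipsoid with centre `z` and shape `L`, dilated by `r` about its centre.
It is degenerate when `L` is singular, so that the ellipsoids contained in a compact set form a
compact family. -/
def closedEllipsoid (z : E) (L : E →L[ℝ] E) (r : ℝ) : Set E :=
  (fun v => z + L v) '' closedBall 0 r

theorem closedEllipsoid_subset_iff {z : E} {L : E →L[ℝ] E} {r : ℝ} {K : Set E} :
    closedEllipsoid z L r ⊆ K ↔ ∀ v, ‖v‖ ≤ r → z + L v ∈ K := by
  simp [closedEllipsoid, subset_def]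

theorem mem_closedEllipsoid_iff {z : E} (L : E ≃L[ℝ] E) {r : ℝ} {x : E} :
    x ∈ closedEllipsoid z (L : E →L[ℝ] E) r ↔ ‖L.symm (x - z)‖ ≤ r := by
  constructor
  · rintro ⟨v, hv, rfl⟩
    simpa using hv
  · exact fun hx => ⟨L.symm (x - z), by simpa using hx, by simp⟩

theorem interior_closedEllipsoid (z : E) (L : E ≃L[ℝ] E) {r : ℝ} (hr : r ≠ 0) :
    interior (closedEllipsoid z (L : E →L[ℝ] E) r) = (fun v => z + L v) '' ball 0 r := by
  rw [← interior_closedBall (0 : E) hr]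
  exact ((L.toHomeomorph.trans (Homeomorph.addLeft z)).image_interior (closedBall 0 r)).symm

theorem image_ball_subset_ball_norm (z : E) {L : E →L[ℝ] E} (hL : L ≠ 0) :
    (fun v => z + L v) '' ball 0 1 ⊆ ball z ‖L‖ := by
  rintro _ ⟨v, hv, rfl⟩
  rw [mem_ball_zero_iff] at hv
  rw [mem_ball_iff_norm, add_sub_cancel_left]
  calc ‖L v‖ ≤ ‖L‖ * ‖v‖ := L.le_opNorm v
    _ < ‖L‖ := mul_lt_of_lt_one_right (norm_pos_iff.2 hL) hv

theorem ball_subset_image_ball_of_le {z : E} {L : E ≃L[ℝ] E} {δ : ℝ} (hδ : 0 < δ)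
    (hL : ∀ v, δ * ‖v‖ ≤ ‖L v‖) : ball z δ ⊆ (fun v => z + L v) '' ball 0 1 := by
  intro x hx
  refine ⟨L.symm (x - z), ?_, by simp⟩
  have h : δ * ‖L.symm (x - z)‖ < δ * 1 :=
    calc δ * ‖L.symm (x - z)‖ ≤ ‖x - z‖ := by simpa using hL (L.symm (x - z))
      _ < δ * 1 := by rwa [mul_one, ← mem_ball_iff_norm]
  exact mem_ball_zero_iff.2 (lt_of_mul_lt_mul_left h hδ.le)

theorem two_mul_norm_le_diam_of_closedEllipsoid_subset {z : E} {L : E →L[ℝ] E} {K : Set E}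
    (hK : Bornology.IsBounded K) (hLK : closedEllipsoid z L 1 ⊆ K) : 2 * ‖L‖ ≤ diam K := by
  rw [closedEllipsoid_subset_iff] at hLK
  suffices ‖L‖ ≤ diam K / 2 by linarith
  refine L.opNorm_le_of_unit_norm (by positivity) fun v hv => ?_
  have hdist : dist (z + L v) (z + L (-v)) = 2 * ‖L v‖ := by
    rw [dist_add_left, map_neg, dist_eq_norm, sub_neg_eq_add, ← two_smul ℝ, norm_smul,
      Real.norm_two]
  have := dist_le_diam_of_mem hK (hLK v hv.le) (hLK (-v) (by simp [hv]))
  linarith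

theorem isClosed_setOf_closedEllipsoid_subset {K : Set E} (hK : IsClosed K) (r : ℝ) :
    IsClosed {q : E × (E →L[ℝ] E) | closedEllipsoid q.1 q.2 r ⊆ K} := by
  simp only [closedEllipsoid_subset_iff, ofPred_forall]
  exact isClosed_iInter fun v => isClosed_iInter fun _ => hK.preimage (by fun_prop)

theorem isBounded_setOf_closedEllipsoid_subset {K : Set E} (hK : Bornology.IsBounded K) :
    Bornology.IsBounded {q : E × (E →L[ℝ] E) | closedEllipsoid q.1 q.2 1 ⊆ K} := by
  refine (hK.prod (isBounded_closedBall (x := 0) (r := diam K / 2))).subset ?_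
  rintro ⟨z, L⟩ hzL
  refine ⟨by simpa using closedEllipsoid_subset_iff.1 hzL 0 (by simp), ?_⟩
  rw [mem_closedBall_zero_iff]
  linarith [two_mul_norm_le_diam_of_closedEllipsoid_subset hK hzL]

theorem exists_maximal_closedEllipsoid [FiniteDimensional ℝ E] {K : Set E}
    (hK : IsCompact K) (hK_int : (interior K).Nonempty) :
    ∃ (z : E) (L : E ≃L[ℝ] E), closedEllipsoid z (L : E →L[ℝ] E) 1 ⊆ K ∧
      ∀ (z' : E) (L' : E →L[ℝ] E), closedEllipsoid z' L' 1 ⊆ K →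
        |L'.det| ≤ |(L : E →L[ℝ] E).det| := by
  have : ProperSpace E := FiniteDimensional.proper ℝ E
  have : ProperSpace (E →L[ℝ] E) := FiniteDimensional.proper ℝ _
  have compact : IsCompact {q : E × (E →L[ℝ] E) | closedEllipsoid q.1 q.2 1 ⊆ K} :=
    isCompact_of_isClosed_isBounded (isClosed_setOf_closedEllipsoid_subset hK.isClosed 1)
      (isBounded_setOf_closedEllipsoid_subset hK.isBounded)
  obtain ⟨c, hc⟩ := hK_int
  obtain ⟨r, hr, hrK⟩ := nhds_basis_closedBall.mem_iff.1 (mem_interior_iff_mem_nhds.1 hc)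
  have ball_mem : closedEllipsoid c (r • ContinuousLinearMap.id ℝ E) 1 ⊆ K := by
    refine closedEllipsoid_subset_iff.2 fun v hv => hrK ?_
    simpa [norm_smul, abs_of_pos hr] using mul_le_of_le_one_right hr.le hv
  obtain ⟨⟨z, L⟩, hzL, hmax⟩ := compact.exists_isMaxOn
    ⟨(c, r • ContinuousLinearMap.id ℝ E), ball_mem⟩ (f := fun q => |q.2.det|)
    (ContinuousLinearMap.continuous_det.comp continuous_snd).abs.continuousOn
  have det_ne_zero : L.det ≠ 0 := by
    refine abs_pos.1 ((abs_pos.2 ?_).trans_le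
      (isMaxOn_iff.1 hmax (c, r • ContinuousLinearMap.id ℝ E) ball_mem))
    simp [ContinuousLinearMap.det, LinearMap.det_smul, hr.ne']
  refine ⟨z, L.toContinuousLinearEquivOfDetNeZero det_ne_zero, ?_, fun z' L' h => ?_⟩
  · simpa using hzL
  · simpa using isMaxOn_iff.1 hmax (z', L') h

end Ellipsoid

section John

variable {E : Type*} [NormedAddCommGroup E] [InnerProductSpace ℝ E] [FiniteDimensional ℝ E]

theorem exists_closedEllipsoid_subset_one_lt_det {K : Set E} (hK_closed : IsClosed K)
    (hK : Convex ℝ K) (hball : closedBall 0 1 ⊆ K) {p : E} (hp : p ∈ K)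
    (hdim : Module.finrank ℝ E < ‖p‖) :
    ∃ (z : E) (D : E →L[ℝ] E), closedEllipsoid z D 1 ⊆ K ∧ 1 < D.det := by
  have : CompleteSpace E := FiniteDimensional.complete ℝ E
  have hp0 : p ≠ 0 := norm_pos_iff.1 ((Nat.cast_nonneg _).trans_lt hdim)
  have : Nontrivial E := nontrivial_of_ne p 0 hp0
  have finrank_pos : 1 ≤ Module.finrank ℝ E := Module.finrank_pos
  obtain ⟨e, he, hpe⟩ : ∃ e : E, ‖e‖ = 1 ∧ p = ‖p‖ • e :=
    ⟨‖p‖⁻¹ • p, by simp [norm_smul, hp0], by simp [smul_smul, hp0]⟩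
  have he_inner (w : E) : |⟪w, e⟫| ≤ ‖w‖ := by simpa [he] using abs_real_inner_le_norm w e
  obtain ⟨s, b, hs, hb, hb_sq, hdet⟩ := exists_axis_lengths_one_lt_mul_pow (d := ‖p‖)
    (m := Module.finrank ℝ E - 1) (by rwa [Nat.cast_pred finrank_pos, sub_add_cancel])
  refine ⟨s • e, axialStretch e (1 + s) b, closedEllipsoid_subset_iff.2 fun v hv => ?_, ?_⟩
  · refine mem_of_forall_inner_le_max hK_closed hK hball hp fun w => ?_
    calc ⟪w, s • e + axialStretch e (1 + s) b v⟫
        = s * ⟪w, e⟫ + ⟪axialStretch e (1 + s) b w, v⟫ := by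
          rw [inner_add_right, real_inner_smul_right, inner_axialStretch_right]
      _ ≤ s * ⟪w, e⟫ + ‖axialStretch e (1 + s) b w‖ := by
          gcongr
          exact (real_inner_le_norm _ _).trans (mul_le_of_le_one_right (norm_nonneg _) hv)
      _ ≤ max ‖w‖ (‖p‖ * ⟪w, e⟫) :=
          mul_add_le_max_of_sq_le ((Nat.one_le_cast.2 finrank_pos).trans_lt hdim) hs hb_sq
            (he_inner w) (norm_axialStretch_sq he _ _ w).le
      _ = max ‖w‖ ⟪w, p⟫ := by rw [← real_inner_smul_right, ← hpe]
  · rwa [det_axialStretch he _ hb.ne']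

theorem exists_john_closedEllipsoid {K : Set E} (hK_compact : IsCompact K) (hK : Convex ℝ K)
    (hK_int : (interior K).Nonempty) :
    ∃ (z : E) (L : E ≃L[ℝ] E), closedEllipsoid z (L : E →L[ℝ] E) 1 ⊆ K ∧
      K ⊆ closedEllipsoid z (L : E →L[ℝ] E) (Module.finrank ℝ E) := by
  obtain ⟨z, L, hLK, hmax⟩ := exists_maximal_closedEllipsoid hK_compact hK_int
  refine ⟨z, L, hLK, fun x hx => (mem_closedEllipsoid_iff L).2 ?_⟩
  by_contra! hlt
  have closed : IsClosed ((fun v => z + L v) ⁻¹' K) :=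
    hK_compact.isClosed.preimage (by fun_prop)
  have convex : Convex ℝ ((fun v => z + L v) ⁻¹' K) :=
    (hK.translate_preimage_right z).linear_preimage (L : E →ₗ[ℝ] E)
  obtain ⟨z', D, hD, hdet⟩ := exists_closedEllipsoid_subset_one_lt_det closed convex
    (fun v hv => closedEllipsoid_subset_iff.1 hLK v (by simpa using hv))
    (p := L.symm (x - z)) (by simpa using hx) hlt
  have larger : closedEllipsoid (z + L z') ((L : E →L[ℝ] E).comp D) 1 ⊆ K :=
    closedEllipsoid_subset_iff.2 fun v hv => by
      simpa [add_assoc] using closedEllipsoid_subset_iff.1 hD v hv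
  have det_comp : ((L : E →L[ℝ] E).comp D).det = (L : E →L[ℝ] E).det * D.det := by
    simp [ContinuousLinearMap.det]
  have det_ne_zero : (L : E →L[ℝ] E).det ≠ 0 := L.toLinearEquiv.isUnit_det'.ne_zero
  refine (hmax _ _ larger).not_gt ?_
  rw [det_comp, abs_mul]
  exact lt_mul_of_one_lt_right (abs_pos.2 det_ne_zero) (hdet.trans_le (le_abs_self _))

end John

section Width

variable {E : Type*} [NormedAddCommGroup E] [InnerProductSpace ℝ E]

/-- The length of the orthogonal projection of `K` onto the line spanned by the unit vector `w`;
for general `w` it is scaled by `‖w‖`. -/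
noncomputable def projectionWidth (K : Set E) (w : E) : ℝ :=
  diam ((fun x => ⟪w, x⟫) '' K)

theorem projectionWidth_smul (K : Set E) (a : ℝ) (w : E) :
    projectionWidth K (a • w) = |a| * projectionWidth K w := by
  rw [projectionWidth, projectionWidth, ← Real.norm_eq_abs, ← diam_smul₀, ← image_smul,
    image_image]
  simp only [real_inner_smul_left, smul_eq_mul]

theorem projectionWidth_mono {K K' : Set E} (h : K ⊆ K') (hK' : Bornology.IsBounded K') (w : E) :
    projectionWidth K w ≤ projectionWidth K' w :=
  diam_mono (image_mono h) ((innerSL ℝ w).lipschitz.isBounded_image hK')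

theorem projectionWidth_le_of_subset_closedEllipsoid [CompleteSpace E] {K : Set E} {z : E}
    {L : E →L[ℝ] E} {r : ℝ} (hr : 0 ≤ r) (hK : K ⊆ closedEllipsoid z L r) (w : E) :
    projectionWidth K w ≤ 2 * r * ‖L.adjoint w‖ := by
  refine diam_le_of_forall_dist_le (by positivity) ?_
  rintro _ ⟨x, hx, rfl⟩ _ ⟨y, hy, rfl⟩
  obtain ⟨u, hu, rfl⟩ := hK hx
  obtain ⟨v, hv, rfl⟩ := hK hy
  rw [mem_closedBall_zero_iff] at hu hv
  calc dist ⟪w, z + L u⟫ ⟪w, z + L v⟫ = |⟪L.adjoint w, u - v⟫| := by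
        simp only [Real.dist_eq, ← inner_sub_right, add_sub_add_left_eq_sub, ← map_sub,
          ContinuousLinearMap.adjoint_inner_left]
    _ ≤ ‖L.adjoint w‖ * ‖u - v‖ := abs_real_inner_le_norm _ _
    _ ≤ ‖L.adjoint w‖ * (r + r) := by
        gcongr
        exact (norm_sub_le u v).trans (add_le_add hu hv)
    _ = 2 * r * ‖L.adjoint w‖ := by ring

theorem mul_norm_le_norm_adjoint_of_le_projectionWidth [CompleteSpace E] {K : Set E} {z : E}
    {L : E →L[ℝ] E} {c r : ℝ} (hc : 0 ≤ c) (hr : 0 ≤ r) (hK_bdd : Bornology.IsBounded K)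
    (hLK : closedEllipsoid z L 1 ⊆ K) (hKL : K ⊆ closedEllipsoid z L r)
    (hwidth : ∀ w, ‖w‖ = 1 → c * diam K ≤ projectionWidth K w) (w : E) :
    c * ‖L‖ * ‖w‖ ≤ r * ‖L.adjoint w‖ := by
  rcases eq_or_ne w 0 with rfl | hw
  · simp
  have width_ge : ‖w‖ * (c * diam K) ≤ projectionWidth K w := by
    have := hwidth (‖w‖⁻¹ • w) (by simp [norm_smul, hw])
    rwa [projectionWidth_smul, abs_inv, abs_norm, le_inv_mul_iff₀ (norm_pos_iff.2 hw)] at this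
  have width_le := projectionWidth_le_of_subset_closedEllipsoid hr hKL w
  have diam_ge := two_mul_norm_le_diam_of_closedEllipsoid_subset hK_bdd hLK
  refine le_of_mul_le_mul_left ?_ two_pos
  calc 2 * (c * ‖L‖ * ‖w‖) = ‖w‖ * (c * (2 * ‖L‖)) := by ring
    _ ≤ ‖w‖ * (c * diam K) := by gcongr
    _ ≤ 2 * (r * ‖L.adjoint w‖) := by linarith

theorem mul_norm_le_norm_apply_of_adjoint [CompleteSpace E] {L : E ≃L[ℝ] E} {δ : ℝ}
    (hδ : 0 ≤ δ) (hL : ∀ w, δ * ‖w‖ ≤ ‖(L : E →L[ℝ] E).adjoint w‖) (u : E) :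
    δ * ‖u‖ ≤ ‖L u‖ := by
  rcases eq_or_ne u 0 with rfl | hu
  · simp
  let w := (L.symm : E →L[ℝ] E).adjoint u
  have adjoint_w : (L : E →L[ℝ] E).adjoint w = u := by
    rw [← ContinuousLinearMap.comp_apply, ← ContinuousLinearMap.adjoint_comp]
    simp [ContinuousLinearMap.adjoint_id]
  have sq_le : ‖u‖ ^ 2 ≤ ‖w‖ * ‖L u‖ :=
    calc ‖u‖ ^ 2 = ⟪w, L u⟫ := by
          simp [w, ContinuousLinearMap.adjoint_inner_left]
      _ ≤ ‖w‖ * ‖L u‖ := real_inner_le_norm _ _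
  refine le_of_mul_le_mul_right ?_ (norm_pos_iff.2 hu)
  calc δ * ‖u‖ * ‖u‖ = δ * ‖u‖ ^ 2 := by ring
    _ ≤ δ * (‖w‖ * ‖L u‖) := by gcongr
    _ = δ * ‖w‖ * ‖L u‖ := by ring
    _ ≤ ‖u‖ * ‖L u‖ := by
        gcongr
        simpa only [adjoint_w] using hL w
    _ = ‖L u‖ * ‖u‖ := mul_comm _ _

theorem exists_round_john_ellipsoid [FiniteDimensional ℝ E] [Nontrivial E] {U : Set E}
    (hU_open : IsOpen U) (hU : Convex ℝ U) (hU_bdd : Bornology.IsBounded U)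
    (hU_ne : U.Nonempty) {c : ℝ} (hc : 0 < c)
    (hwidth : ∀ w, ‖w‖ = 1 → c * diam U ≤ projectionWidth U w) :
    ∃ (z : E) (L : E ≃L[ℝ] E), (fun v => z + L v) '' ball 0 1 ⊆ U ∧
      U ⊆ (fun v => z + L v) '' ball 0 (Module.finrank ℝ E) ∧
      ∃ R : ℝ, 0 < R ∧ ball z (c / Module.finrank ℝ E * R) ⊆ (fun v => z + L v) '' ball 0 1 ∧
        (fun v => z + L v) '' ball 0 1 ⊆ ball z R := by
  have : CompleteSpace E := FiniteDimensional.complete ℝ E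
  have : ProperSpace E := FiniteDimensional.proper ℝ E
  have finrank_pos : (0 : ℝ) < Module.finrank ℝ E := Nat.cast_pos.2 Module.finrank_pos
  have interior_closure : interior (closure U) = U := by
    rw [hU.interior_closure_eq_interior_of_nonempty_interior (by rwa [hU_open.interior_eq]),
      hU_open.interior_eq]
  obtain ⟨z, L, hLU, hUL⟩ := exists_john_closedEllipsoid hU_bdd.isCompact_closure hU.closure
    (by rwa [interior_closure])
  have hL : (L : E →L[ℝ] E) ≠ 0 := fun h => by
    obtain ⟨v, hv⟩ := exists_ne (0 : E)
    exact hv (L.map_eq_zero_iff.1 (DFunLike.congr_fun h v))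
  have hL_pos := norm_pos_iff.2 hL
  have width_closure (w : E) (hw : ‖w‖ = 1) :
      c * diam (closure U) ≤ projectionWidth (closure U) w := by
    rw [diam_closure]
    exact (hwidth w hw).trans (projectionWidth_mono subset_closure hU_bdd.closure w)
  have adjoint_expands (w : E) :
      c / Module.finrank ℝ E * ‖(L : E →L[ℝ] E)‖ * ‖w‖ ≤ ‖(L : E →L[ℝ] E).adjoint w‖ := by
    rw [div_mul_eq_mul_div, div_mul_eq_mul_div, div_le_iff₀' finrank_pos]
    exact mul_norm_le_norm_adjoint_of_le_projectionWidth hc.le finrank_pos.le hU_bdd.closure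
      hLU hUL width_closure w
  refine ⟨z, L, ?_, ?_, ‖(L : E →L[ℝ] E)‖, hL_pos, ?_, image_ball_subset_ball_norm z hL⟩
  · rw [← interior_closedEllipsoid z L one_ne_zero, ← interior_closure]
    exact interior_mono hLU
  · rw [← interior_closedEllipsoid z L finrank_pos.ne']
    exact interior_maximal (subset_closure.trans hUL) hU_open
  · exact ball_subset_image_ball_of_le (by positivity)
      (mul_norm_le_norm_apply_of_adjoint (by positivity) adjoint_expands)

end Width

section Perimeter

theorem exists_nonneg_add_smul_mem_frontier {E : Type*} [NormedAddCommGroup E] [NormedSpace ℝ E]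
    {V : Set E} (hV : Bornology.IsBounded V) {x w : E} (hx : x ∈ closure V) (hw : w ≠ 0) :
    ∃ t : ℝ, 0 ≤ t ∧ x + t • w ∈ frontier V := by
  let ray : NNReal → E := fun t => x + t • w
  have ray_continuous : Continuous ray := by fun_prop
  have not_univ : ray ⁻¹' closure V ≠ univ := by
    intro h
    obtain ⟨R, hR⟩ := hV.closure.subset_closedBall x
    have norm_le (t : NNReal) : t * ‖w‖ ≤ R := by
      simpa [ray, norm_smul, NNReal.smul_def] using hR (h ▸ mem_univ t : t ∈ ray ⁻¹' closure V)
    obtain ⟨t, ht⟩ := exists_nat_gt (R / ‖w‖)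
    rw [div_lt_iff₀ (norm_pos_iff.2 hw)] at ht
    exact ht.not_ge (by simpa using norm_le t)
  obtain ⟨t, ht⟩ := nonempty_frontier_iff.2
    ⟨⟨0, by simpa [ray] using hx⟩, not_univ⟩
  exact ⟨t, t.2, frontier_closure_subset (ray_continuous.frontier_preimage_subset _ ht)⟩

variable {E : Type*} [NormedAddCommGroup E] [InnerProductSpace ℝ E]

theorem exists_ne_zero_inner_eq_zero (hE : 1 < Module.rank ℝ E) (w : E) :
    ∃ e : E, e ≠ 0 ∧ ⟪w, e⟫ = 0 := by
  have orthogonal_ne_bot : (ℝ ∙ w)ᗮ ≠ ⊥ := by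
    rw [Ne, Submodule.orthogonal_eq_bot_iff]
    intro h
    refine hE.not_ge ?_
    rw [← rank_top ℝ E, ← h]
    simpa using rank_span_le (R := ℝ) {w}
  obtain ⟨e, he, he0⟩ := Submodule.exists_mem_ne_zero_of_ne_bot orthogonal_ne_bot
  exact ⟨e, he0, Submodule.mem_orthogonal_singleton_iff_inner_right.1 he⟩

theorem exists_outer_normal [CompleteSpace E] {U : Set E} (hU_open : IsOpen U)
    (hU : Convex ℝ U) {x : E} (hx : x ∈ frontier U) :
    ∃ w : E, w ≠ 0 ∧ ∀ y ∈ closure U, ⟪w, y - x⟫ ≤ 0 := by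
  rw [hU_open.frontier_eq] at hx
  obtain ⟨f, hf⟩ := geometric_hahn_banach_open_point hU hU_open hx.2
  obtain ⟨w, rfl⟩ := (InnerProductSpace.toDual ℝ E).surjective f
  simp only [InnerProductSpace.toDual_apply_apply] at hf
  refine ⟨w, ?_, fun y hy => ?_⟩
  · rintro rfl
    obtain ⟨a, ha⟩ := closure_nonempty_iff.1 ⟨x, hx.1⟩
    simpa using hf a ha
  · have closed : IsClosed {y | ⟪w, y - x⟫ ≤ 0} := isClosed_le (by fun_prop) (by fun_prop)
    refine closure_minimal (fun y hy => ?_) closed hy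
    simpa [inner_sub_right] using (hf y hy).le

theorem norm_sub_le_norm_sub_of_inner_nonpos {x y p q : E} (hp : ⟪p - x, y - x⟫ ≤ 0)
    (hq : ⟪q - y, x - y⟫ ≤ 0) : ‖x - y‖ ≤ ‖p - q‖ := by
  have sq_le_inner : ‖x - y‖ ^ 2 ≤ ⟪p - q, x - y⟫ := by
    rw [← real_inner_self_eq_norm_sq]
    simp only [inner_sub_left, inner_sub_right] at hp hq ⊢
    linarith
  have := sq_le_inner.trans (real_inner_le_norm _ _)
  by_contra! hlt
  nlinarith [norm_nonneg (p - q)]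

variable [MeasurableSpace E] [BorelSpace E]

-- The exit points from `V` of the outer normal rays of `U` define a section of the nearest-point
-- projection onto `closure U`, which is 1-Lipschitz.
theorem hausdorffMeasure_frontier_mono [CompleteSpace E] {U V : Set E} (hU_open : IsOpen U)
    (hU : Convex ℝ U) (hV : Bornology.IsBounded V) (hUV : U ⊆ V) {d : ℝ} (hd : 0 ≤ d) :
    μH[d] (frontier U) ≤ μH[d] (frontier V) := by
  have exit_point (x : frontier U) :
      ∃ p ∈ frontier V, ∀ y ∈ closure U, ⟪p - x, y - x⟫ ≤ 0 := by
    obtain ⟨w, hw0, hw⟩ := exists_outer_normal hU_open hU x.2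
    obtain ⟨t, ht, htV⟩ := exists_nonneg_add_smul_mem_frontier hV
      (closure_mono hUV (frontier_subset_closure x.2)) hw0
    refine ⟨x + t • w, htV, fun y hy => ?_⟩
    rw [add_sub_cancel_left, real_inner_smul_left]
    exact mul_nonpos_of_nonneg_of_nonpos ht (hw y hy)
  choose g hgV hg using exit_point
  have antilipschitz : AntilipschitzWith 1 g := by
    refine AntilipschitzWith.of_le_mul_dist fun x y => ?_
    simpa [Subtype.dist_eq, dist_eq_norm] using norm_sub_le_norm_sub_of_inner_nonpos
      (hg x y (frontier_subset_closure y.2)) (hg y x (frontier_subset_closure x.2))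
  calc μH[d] (frontier U) = μH[d] (univ : Set (frontier U)) := by
        simpa using isometry_subtype_coe.hausdorffMeasure_image (Or.inl hd)
          (univ : Set (frontier U))
    _ ≤ μH[d] (g '' univ) := by
        simpa using antilipschitz.le_hausdorffMeasure_image hd univ
    _ ≤ μH[d] (frontier V) := measure_mono (by rintro _ ⟨x, -, rfl⟩; exact hgV x)

theorem hausdorffMeasure_sphere_lt_top (hE : Module.finrank ℝ E = 2) (x : E) (R : ℝ) :
    μH[1] (sphere x R) < ⊤ := by
  have : FiniteDimensional ℝ E := .of_finrank_pos (by omega)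
  let Φ : ℂ ≃ₗᵢ[ℝ] E := Complex.orthonormalBasisOneI.equiv (stdOrthonormalBasis ℝ E)
    (finCongr hE.symm)
  have image_circle : Φ '' (circleMap (Φ.symm x) R '' Ioc 0 (2 * Real.pi)) = sphere x |R| := by
    rw [image_circleMap_Ioc, LinearIsometryEquiv.image_sphere, Φ.apply_symm_apply]
  calc μH[1] (sphere x R) ≤ μH[1] (sphere x |R|) :=
        measure_mono fun p hp => by rwa [abs_of_nonneg (nonneg_of_mem_sphere hp)]
    _ = μH[1] (circleMap (Φ.symm x) R '' Ioc 0 (2 * Real.pi)) := by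
        rw [← image_circle, Φ.isometry.hausdorffMeasure_image (Or.inl zero_le_one)]
    _ ≤ Real.nnabs R * μH[1] (Ioc 0 (2 * Real.pi)) := by
        simpa using (lipschitzWith_circleMap (Φ.symm x) R).hausdorffMeasure_image_le
          zero_le_one (Ioc 0 (2 * Real.pi))
    _ < ⊤ := by
        simp [hausdorffMeasure_real, ENNReal.mul_lt_top]

theorem hausdorffMeasure_frontier_lt_top (hE : Module.finrank ℝ E = 2) {U : Set E}
    (hU_open : IsOpen U) (hU : Convex ℝ U) (hU_bdd : Bornology.IsBounded U) :
    μH[1] (frontier U) < ⊤ := by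
  have : FiniteDimensional ℝ E := .of_finrank_pos (by omega)
  have : CompleteSpace E := FiniteDimensional.complete ℝ E
  obtain ⟨R, hR, hUR⟩ := hU_bdd.subset_ball_lt 0 0
  calc μH[1] (frontier U) ≤ μH[1] (frontier (ball (0 : E) R)) :=
        hausdorffMeasure_frontier_mono hU_open hU isBounded_ball hUR zero_le_one
    _ < ⊤ := by
        rw [frontier_ball _ hR.ne']
        exact hausdorffMeasure_sphere_lt_top hE 0 R

theorem ediam_le_hausdorffMeasure_frontier (hE : 1 < Module.rank ℝ E) {U : Set E}
    (hU : IsPreconnected U) (hU_bdd : Bornology.IsBounded U) :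
    ediam U ≤ μH[1] (frontier U) := by
  refine ediam_le fun x hx y hy => ?_
  rcases eq_or_ne x y with rfl | hxy
  · simp
  let w : E := ‖y - x‖⁻¹ • (y - x)
  have hw : ‖w‖ = 1 := by simp [w, norm_smul, sub_ne_zero.2 hxy.symm]
  have lipschitz : LipschitzWith 1 (fun p => ⟪w, p⟫) := by
    have := (innerSL ℝ w).lipschitz
    rwa [show ‖innerSL ℝ w‖₊ = 1 from NNReal.eq (by simp [hw])] at this
  have Icc_subset : Icc ⟪w, x⟫ ⟪w, y⟫ ⊆ (fun p => ⟪w, p⟫) '' frontier U := by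
    intro r hr
    obtain ⟨p, hp, rfl⟩ := (hU.image _ lipschitz.continuous.continuousOn).Icc_subset
      (mem_image_of_mem _ hx) (mem_image_of_mem _ hy) hr
    obtain ⟨e, he, hwe⟩ := exists_ne_zero_inner_eq_zero hE w
    obtain ⟨t, -, ht⟩ := exists_nonneg_add_smul_mem_frontier hU_bdd (subset_closure hp) he
    exact ⟨p + t • e, ht, by simp [inner_add_right, inner_smul_right, hwe]⟩
  have inner_sub : ⟪w, y⟫ - ⟪w, x⟫ = dist x y := by
    rw [← inner_sub_right, real_inner_smul_left, real_inner_self_eq_norm_sq, dist_comm,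
      dist_eq_norm]
    field_simp
  calc edist x y = μH[1] (Icc ⟪w, x⟫ ⟪w, y⟫) := by
        rw [hausdorffMeasure_real, Real.volume_Icc, inner_sub, edist_dist]
    _ ≤ μH[1] ((fun p => ⟪w, p⟫) '' frontier U) := measure_mono Icc_subset
    _ ≤ μH[1] (frontier U) := by
        simpa using lipschitz.hausdorffMeasure_image_le zero_le_one (frontier U)

theorem diam_le_toReal_hausdorffMeasure_frontier (hE : Module.finrank ℝ E = 2) {U : Set E}
    (hU_open : IsOpen U) (hU : Convex ℝ U) (hU_bdd : Bornology.IsBounded U) :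
    diam U ≤ (μH[1] (frontier U)).toReal := by
  have : FiniteDimensional ℝ E := .of_finrank_pos (by omega)
  have one_lt_rank : 1 < Module.rank ℝ E := by
    rw [← Module.finrank_eq_rank, hE]
    norm_num
  exact ENNReal.toReal_mono (hausdorffMeasure_frontier_lt_top hE hU_open hU hU_bdd).ne
    (ediam_le_hausdorffMeasure_frontier one_lt_rank hU.isPreconnected hU_bdd)

end Perimeter

/-- A bounded convex open set `U ⊆ ℝ²` all of whose one-dimensional
projections have length at least `c₀ P(U)` admits a John ellipse `Q = z + L(B₁)` with
`Q ⊆ U ⊆ 2Q` whose eccentricity is bounded away from `1` in terms of `c₀` only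
(expressed by the roundness condition `ball z (ε R) ⊆ Q ⊆ ball z R`). -/
theorem stmt_14 (c₀ : ℝ) (hc₀ : 0 < c₀) :
    ∃ ε : ℝ, 0 < ε ∧
    ∀ U : Set (EuclideanSpace ℝ (Fin 2)), IsOpen U → Convex ℝ U →
      Bornology.IsBounded U → U.Nonempty →
      (∀ w : EuclideanSpace ℝ (Fin 2), ‖w‖ = 1 →
        c₀ * (μH[(1:ℝ)] (frontier U)).toReal ≤
          Metric.diam ((fun x => (⟪w, x⟫ : ℝ)) '' U)) →
      ∃ (z : EuclideanSpace ℝ (Fin 2))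
        (L : EuclideanSpace ℝ (Fin 2) ≃L[ℝ] EuclideanSpace ℝ (Fin 2)),
        (fun v => z + L v) '' ball 0 1 ⊆ U ∧
        U ⊆ (fun v => z + (2:ℝ) • L v) '' ball 0 1 ∧
        ∃ R : ℝ, 0 < R ∧
          ball z (ε * R) ⊆ (fun v => z + L v) '' ball 0 1 ∧
          (fun v => z + L v) '' ball (0 : EuclideanSpace ℝ (Fin 2)) 1 ⊆ ball z R := by
  refine ⟨c₀ / 2, by positivity, fun U hU_open hU hU_bdd hU_ne hproj => ?_⟩
  have finrank_eq : Module.finrank ℝ (EuclideanSpace ℝ (Fin 2)) = 2 := finrank_euclideanSpace_fin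
  have width_ge (w : EuclideanSpace ℝ (Fin 2)) (hw : ‖w‖ = 1) :
      c₀ * diam U ≤ projectionWidth U w :=
    calc c₀ * diam U ≤ c₀ * (μH[1] (frontier U)).toReal := by
          gcongr
          exact diam_le_toReal_hausdorffMeasure_frontier finrank_eq hU_open hU hU_bdd
      _ ≤ projectionWidth U w := hproj w hw
  obtain ⟨z, L, inner_subset, subset_outer, round⟩ :=
    exists_round_john_ellipsoid hU_open hU hU_bdd hU_ne hc₀ width_ge
  rw [finrank_eq, Nat.cast_ofNat] at subset_outer round
  refine ⟨z, L, inner_subset, ?_, round⟩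
  have ball_two : ball (0 : EuclideanSpace ℝ (Fin 2)) 2 = (fun v => (2 : ℝ) • v) '' ball 0 1 := by
    rw [image_smul, smul_unitBall_of_pos two_pos]
  simpa only [ball_two, image_image, map_smul] using subset_outer
end
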